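/- Let F_q be a finite field of order q and M ∈ F_q[Y] a degree n Morse polynomial, where n is coprime to q and q ≥ (2n·n!)². Then there exists b ∈ F_q such that M(Y) + b is irreducible in F_q[Y] (hence the extension F_{q^n}/F_q is realized by M(Y) + b). -/

import Mathlib

/-!
The proof is by Stepanov's method, with no appeal to the Riemann hypothesis for curves.
Let `q = #F`, let `k` be an algebraic closure of `F`, and let `n = N + 1` be the degree of `M`, which
may be taken monic.

*Counting.* Above each `t ∈ F` which is not a critical value of `M` lie `N + 1` points `α ∈ k` with
`M(α) = t`, and the Frobenius map `z ↦ z ^ q` permutes them. If `α` has Frobenius period `N + 1`,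
then `M - t` is its minimal polynomial, hence irreducible (`irreducible_of_period`). If no `M + b` is
irreducible, then all these points, at least `(N + 1)(q - N)` in number, have period `r + 1` with
`r < N`. For each such `r` there are at most `q + O(√q)` of them, with an explicit constant
(`stepanov_bound`). Adding up over `r` leaves at most `N q + O(√q)` points, a contradiction for
`q ≥ (2 n n!)²` (`numerics`, `exists_irreducible`).

*Irreducibility.* Let `C_r` be the curve of `(r + 1)`-tuples of distinct points in one fibre of `M`.
For a Morse polynomial, `(M(Y) - M(X)) / (Y - X)` is irreducible: two factors would meet at a
finite point, where both coordinates are critical points with the same value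
(`Morse.F2_irreducible`). Together with the transposition given by the local monodromy at a critical
point (`exists_finite`) this shows that the algebraic relations between the roots of `M(Y) = M(x)` are
invariant under all permutations (`relMonoid_eq_top`), which amounts to the irreducibility of `C_r`.
Consequently suitable *reduced* monomials `m_c` are linearly independent on `C_r`
(`mon_independent`), and every polynomial is on `C_r` a combination of them (`mem_redSub`).

*Stepanov's bound.* A point of period `r + 1` gives a point `y` of `C_r` with `y_{i+1} = y_i ^ q`.
Consider `Φ = ∑ a(c, c') m_c m_{c'} ^ q`. Along a local parametrization of `C_r` at such a `y`, the
`q`-th powers are constant up to order `q`, equal to the values of `m_{c'}` at the shifted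
tuple, so that the vanishing of `Φ` to order `m ≈ √q` there follows from linear conditions on the
coefficients `a`. These conditions are made uniform in `y` by universal local solutions of
bounded degree (`exists_tau`), and they are fewer than the unknowns (`exists_coeffs`). The
product of `Φ` over the tuples starting with a given point is a polynomial in that point,
the norm of `Φ` (`exists_norm`). It is nonzero, because the `m_{c'} ^ q` are independent over the
functions of small degree (`norm_Phi_ne_zero`), its degree is controlled by expansion at infinity
(`natDegree_norm_le`), and it vanishes to order `m` at all the points in question (`pow_dvd_norm`).
Comparing the degree with the number of zeros gives the bound.
-/

open Polynomial

/-- `M` is a Morse polynomial: over an algebraic closure, the zeros of the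
derivative `M'` are simple, and `M` takes pairwise distinct values at the
distinct zeros of `M'`. -/
def IsMorse {k : Type*} [Field k] (M : Polynomial k) : Prop :=
  (Polynomial.derivative (M.map (algebraMap k (AlgebraicClosure k)))).roots.Nodup ∧
  ∀ β ∈ (Polynomial.derivative (M.map (algebraMap k (AlgebraicClosure k)))).roots,
    ∀ β' ∈ (Polynomial.derivative (M.map (algebraMap k (AlgebraicClosure k)))).roots,
      β ≠ β' →
        (M.map (algebraMap k (AlgebraicClosure k))).eval β ≠
          (M.map (algebraMap k (AlgebraicClosure k))).eval β'

namespace MorseIrr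

universe u

/-! ### Root systems and Hensel lifting -/

/-- A monic polynomial of degree `n` over a domain with `n` distinct roots is the product of
the corresponding linear factors. -/
lemma eq_prod_of_roots {R : Type*} [CommRing R] [IsDomain R] {n : ℕ} {f : R[X]} (hf : f.Monic)
    (hn : f.natDegree = n) {x : Fin n → R} (hx : Function.Injective x)
    (hr : ∀ i, f.eval (x i) = 0) : f = ∏ i, (X - C (x i)) := by
  have hm : (∏ i, (X - C (x i))).Monic := monic_prod_of_monic _ _ fun i _ => monic_X_sub_C _
  have hd : (∏ i, (X - C (x i))).natDegree = n := by
    rw [natDegree_prod_of_monic _ _ fun i _ => monic_X_sub_C _]; simp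
  rcases Nat.eq_zero_or_pos n with h0 | h0
  · subst h0
    rw [hf.natDegree_eq_zero.mp hn]; simp
  refine eq_of_degree_sub_lt_of_eval_index_eq (v := x) Finset.univ hx.injOn ?_ ?_
  · have : (f - ∏ i, (X - C (x i))).degree < f.degree := by
      refine degree_sub_lt_left ?_ hf.ne_zero ?_
      · rw [degree_eq_natDegree hf.ne_zero, degree_eq_natDegree hm.ne_zero, hn, hd]
      · rw [hf.leadingCoeff, hm.leadingCoeff]
    simpa [degree_eq_natDegree hf.ne_zero, hn] using this
  · intro i _
    rw [hr, eval_prod]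
    exact (Finset.prod_eq_zero (Finset.mem_univ i) (by simp)).symm

lemma eval_derivative_prod {R : Type*} [CommRing R] {ι : Type*} [Fintype ι] [DecidableEq ι]
    (x : ι → R) (i : ι) :
    (derivative (∏ j, (X - C (x j)))).eval (x i) = ∏ j ∈ Finset.univ.erase i, (x i - x j) := by
  rw [← Finset.mul_prod_erase _ _ (Finset.mem_univ i)]
  simp [derivative_mul, eval_prod]

/-- A *root system* of `M` over `R`: `N + 1` distinct elements of `R` at which `M` takes the
same value. For `M` monic of degree `N + 1` over a domain these are all the roots of `M - t`. -/
structure RootSys {k : Type*} [Field k] (M : k[X]) {N : ℕ} {R : Type*} [CommRing R] [Algebra k R]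
    (x : Fin (N + 1) → R) : Prop where
  inj : Function.Injective x
  eq : ∀ i, aeval (x i) M = aeval (x 0) M

section RS
variable {k : Type*} [Field k] {M : k[X]} {N : ℕ} {R : Type*} [CommRing R] [IsDomain R]
  [Algebra k R] {x : Fin (N + 1) → R}

lemma natDegree_map_sub_C (hM : M.Monic) (hN : M.natDegree = N + 1) (t : R) :
    (M.map (algebraMap k R) - C t).Monic ∧ (M.map (algebraMap k R) - C t).natDegree = N + 1 := by
  have h1 : (M.map (algebraMap k R)).natDegree = N + 1 := by rw [hM.natDegree_map, hN]
  constructor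
  · apply (hM.map _).sub_of_left
    rw [degree_eq_natDegree (hM.map _).ne_zero, h1]
    exact lt_of_le_of_lt degree_C_le (by exact_mod_cast Nat.succ_pos N)
  · rw [natDegree_sub_C, h1]

lemma RootSys.prod_eq (hM : M.Monic) (hN : M.natDegree = N + 1) (h : RootSys M x) :
    M.map (algebraMap k R) - C (aeval (x 0) M) = ∏ i, (X - C (x i)) := by
  obtain ⟨h1, h2⟩ := natDegree_map_sub_C (R := R) hM hN (aeval (x 0) M)
  refine eq_prod_of_roots h1 h2 h.inj fun i => ?_
  rw [eval_sub, eval_C, eval_map_algebraMap, h.eq, sub_self]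

lemma RootSys.derivative_eq (hM : M.Monic) (hN : M.natDegree = N + 1) (h : RootSys M x)
    (i : Fin (N + 1)) :
    aeval (x i) (derivative M) = ∏ j ∈ Finset.univ.erase i, (x i - x j) := by
  rw [← eval_derivative_prod, ← h.prod_eq hM hN]
  simp [derivative_map, eval_map_algebraMap]

lemma RootSys.derivative_ne_zero (hM : M.Monic) (hN : M.natDegree = N + 1) (h : RootSys M x)
    (i : Fin (N + 1)) : aeval (x i) (derivative M) ≠ 0 := by
  rw [h.derivative_eq hM hN, Finset.prod_ne_zero_iff]
  intro j hj
  rw [sub_ne_zero]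
  exact fun e => (Finset.ne_of_mem_erase hj) (h.inj e).symm

end RS

lemma RootSys.map {k : Type*} [Field k] {M : k[X]} {N : ℕ} {R : Type*} [CommRing R]
    [Algebra k R] {x : Fin (N + 1) → R} {S : Type*} [CommRing S] [Algebra k S] (h : RootSys M x) (f : R →ₐ[k] S)
    (hf : Function.Injective f) : RootSys M (fun i => f (x i)) := by
  refine ⟨hf.comp h.inj, fun i => ?_⟩
  simp only [aeval_algHom_apply, h.eq i]

/-- Hensel lifting of a complete system of simple roots to power series. -/
lemma hensel_list {k : Type*} [Field k] {n : ℕ} (f : (PowerSeries k)[X]) (hf : f.Monic)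
    (hn : f.natDegree = n) (r : Fin n → k) (hr : Function.Injective r)
    (h0 : ∀ i, (f.map (PowerSeries.constantCoeff (R := k))).eval (r i) = 0) :
    ∃ ρ : Fin n → PowerSeries k, (∀ i, PowerSeries.constantCoeff (ρ i) = r i) ∧
      f = ∏ i, (X - C (ρ i)) := by
  have hp := eq_prod_of_roots (hf.map (PowerSeries.constantCoeff (R := k)))
    (by rw [hf.natDegree_map, hn]) hr h0
  have hc : ∀ (g : (PowerSeries k)[X]) (a : k),
      (g.map (PowerSeries.constantCoeff (R := k))).eval a =
        PowerSeries.constantCoeff (g.eval (PowerSeries.C a)) := by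
    intro g a
    have := eval₂_hom (p := g) (PowerSeries.constantCoeff (R := k)) (PowerSeries.C a)
    rw [← this, eval_map]
    simp
  have key : ∀ i, ∃ a : PowerSeries k, f.IsRoot a ∧ PowerSeries.constantCoeff a = r i := by
    intro i
    have hh := HenselianRing.is_henselian (R := PowerSeries k)
      (I := Ideal.span {PowerSeries.X}) f hf (PowerSeries.C (r i)) ?_ ?_
    · obtain ⟨a, ha, hb⟩ := hh
      refine ⟨a, ha, ?_⟩
      rw [Ideal.mem_span_singleton, PowerSeries.X_dvd_iff] at hb
      simpa [sub_eq_zero] using hb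
    · rw [Ideal.mem_span_singleton, PowerSeries.X_dvd_iff]
      rw [← hc]
      exact h0 i
    · apply IsUnit.map
      rw [PowerSeries.isUnit_iff_constantCoeff, ← hc, ← derivative_map, hp, eval_derivative_prod,
        isUnit_iff_ne_zero, Finset.prod_ne_zero_iff]
      intro j hj
      rw [sub_ne_zero]
      exact fun e => (Finset.ne_of_mem_erase hj) (hr e).symm
  choose ρ h1 h2 using key
  refine ⟨ρ, h2, eq_prod_of_roots hf hn (fun i j hij => hr ?_) h1⟩
  rw [← h2, ← h2, hij]

/-! ### Norms of functions on tuples of roots -/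

/-- Evaluation of a symmetric polynomial at the roots of `f`: the value is a universal polynomial
in the coefficients of `f`. -/
lemma exists_symm_eval {A : Type*} [CommRing A] (N : ℕ) (f : A[X])
    (ψ : MvPolynomial (Fin N) A) (hψ : ψ.IsSymmetric) :
    ∃ a : A, ∀ (R : Type u) [CommRing R] [IsDomain R] (g : A →+* R) (y : Fin N → R),
      f.map g = ∏ i, (X - C (y i)) → MvPolynomial.eval₂ g y ψ = g a := by
  obtain ⟨p, hp⟩ := MvPolynomial.esymmAlgHom_surjective (σ := Fin N) A (n := N) (by simp)
    ⟨ψ, hψ⟩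
  refine ⟨MvPolynomial.aeval (fun i : Fin N => (-1) ^ (i.val + 1) * f.coeff (N - (i.val + 1))) p,
    fun R _ _ g y hy => ?_⟩
  have h1 : ψ = MvPolynomial.aeval (fun i : Fin N => MvPolynomial.esymm (Fin N) A (i.val + 1)) p := by
    have := congrArg Subtype.val hp
    rw [MvPolynomial.esymmAlgHom_apply] at this
    exact this.symm
  rw [h1]
  have h2 : ∀ i : Fin N, MvPolynomial.eval₂ g y (MvPolynomial.esymm (Fin N) A (i.val + 1)) =
      g ((-1) ^ (i.val + 1) * f.coeff (N - (i.val + 1))) := by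
    intro i
    have h3 : (Multiset.map (fun i => X - C (y i)) Finset.univ.val).prod.coeff (N - (i.val + 1))
       = g (f.coeff (N - (i.val + 1))) := by
      rw [← coeff_map, hy]; rfl
    have h4 := Multiset.prod_X_sub_C_coeff (Multiset.map y Finset.univ.val)
      (k := N - (i.val + 1)) (by simp)
    rw [Multiset.map_map] at h4
    have h5 : N - (N - (i.val + 1)) = i.val + 1 := by omega
    simp only [Multiset.card_map, Finset.card_val, Finset.card_univ, Fintype.card_fin, h5] at h4
    rw [map_mul, ← h3]
    simp only [Function.comp_def] at h4
    rw [h4, map_pow, map_neg, map_one, ← mul_assoc, ← mul_pow]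
    simp only [mul_neg, mul_one, neg_neg, one_pow, one_mul]
    rw [Finset.esymm_map_val]
    simp [MvPolynomial.esymm, MvPolynomial.eval₂_sum, MvPolynomial.eval₂_prod]
  rw [MvPolynomial.aeval_def, MvPolynomial.aeval_def, ← MvPolynomial.coe_eval₂Hom g y,
    MvPolynomial.hom_eval₂, MvPolynomial.hom_eval₂]
  congr 1
  · ext a; simp
  · ext i
    simpa using h2 i

section
variable {k : Type u} [Field k]

/-- The quotient `(M(Y) - M(X)) / (Y - X)`, as a polynomial in `Y` over `k[X]`. -/
noncomputable def F2 (M : k[X]) : k[X][X] := (M.map C) /ₘ (X - C X)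

lemma F2_mul (M : k[X]) : (X - C X) * F2 M = M.map C - C M := by
  have h := modByMonic_add_div (M.map C) (X - C (X : k[X]))
  rw [modByMonic_X_sub_C_eq_C_eval] at h
  have h2 : eval X (M.map (C : k →+* k[X])) = M := by
    rw [eval_map, eval₂_C_X]
  rw [h2] at h
  rw [F2]
  linear_combination h

lemma F2_monic {M : k[X]} (hM : M.Monic) (h : M.natDegree ≠ 0) : (F2 M).Monic := by
  have h1 : (M.map (C : k →+* k[X])).Monic := hM.map _
  have h2 : degree (X - C (X : k[X])) ≤ degree (M.map (C : k →+* k[X])) := by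
    rw [degree_X_sub_C, degree_eq_natDegree h1.ne_zero, hM.natDegree_map]
    exact_mod_cast Nat.one_le_iff_ne_zero.mpr h
  rw [F2, Monic, leadingCoeff_divByMonic_of_monic (monic_X_sub_C _) h2, h1.leadingCoeff]

lemma F2_natDegree {M : k[X]} {N : ℕ} (hM : M.Monic) (h : M.natDegree = N + 1) :
    (F2 M).natDegree = N := by
  rw [F2, natDegree_divByMonic _ (monic_X_sub_C _), hM.natDegree_map, h, natDegree_X_sub_C]
  simp

lemma F2_map_mul (M : k[X]) {R : Type*} [CommRing R] [Algebra k R] (y : R) :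
    (X - C y) * (F2 M).map (aeval y : k[X] →ₐ[k] R).toRingHom =
      M.map (algebraMap k R) - C (aeval y M) := by
  have := congrArg (Polynomial.map (aeval y : k[X] →ₐ[k] R).toRingHom) (F2_mul M)
  simp only [Polynomial.map_mul, Polynomial.map_sub, map_X, map_C, Polynomial.map_map] at this
  simp only [AlgHom.toRingHom_eq_coe, RingHom.coe_coe, aeval_X] at this
  have e : ((aeval y : k[X] →ₐ[k] R) : k[X] →+* R).comp C = algebraMap k R := by
    ext; simp
  rw [e] at this
  exact this

lemma RootSys.F2_eq {M : k[X]} {N : ℕ} {R : Type*} [CommRing R] [IsDomain R]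
    [Algebra k R] {x : Fin (N + 1) → R} (hM : M.Monic) (hN : M.natDegree = N + 1)
    (h : RootSys M x) :
    (F2 M).map (aeval (x 0) : k[X] →ₐ[k] R).toRingHom = ∏ i : Fin N, (X - C (x i.succ)) := by
  have h1 := F2_map_mul M (x 0)
  rw [h.prod_eq hM hN, Fin.prod_univ_succ] at h1
  exact mul_left_cancel₀ (X_sub_C_ne_zero _) h1

/-- The tuple `(x₀, x_{ι 0 + 1}, …, x_{ι (r-1) + 1})`. -/
def tup {R : Type*} {N r : ℕ} (x : Fin (N + 1) → R) (ι : Fin r ↪ Fin N) : Fin (r + 1) → R :=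
  Fin.cons (x 0) (fun j => x (ι j).succ)

/-- The universal norm of `φ`: a one-variable polynomial whose value at the first root of any root
system is the product of the values of `φ` at all the tuples of distinct roots starting with it. -/
lemma exists_norm (M : k[X]) {N : ℕ} (hM : M.Monic) (hN : M.natDegree = N + 1) {r : ℕ}
    (φ : MvPolynomial (Fin (r + 1)) k) :
    ∃ P : k[X], ∀ (R : Type u) [CommRing R] [IsDomain R] [Algebra k R] (x : Fin (N + 1) → R),
      RootSys M x → aeval (x 0) P = ∏ ι : Fin r ↪ Fin N, MvPolynomial.aeval (tup x ι) φ := by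
  let T : (Fin r ↪ Fin N) → MvPolynomial (Fin N) k[X] := fun ι =>
    MvPolynomial.aeval (Fin.cons (MvPolynomial.C X) (fun j => MvPolynomial.X (ι j)) :
      Fin (r + 1) → MvPolynomial (Fin N) k[X]) φ
  have hT : (∏ ι, T ι).IsSymmetric := by
    intro e
    rw [map_prod]
    refine Fintype.prod_equiv (Equiv.embeddingCongr (Equiv.refl _) e) _ _ fun ι => ?_
    simp only [T]
    rw [← AlgHom.restrictScalars_apply k (MvPolynomial.rename e),
      ← AlgHom.comp_apply, MvPolynomial.comp_aeval]
    congr 2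
    funext j
    refine Fin.cases ?_ (fun j => ?_) j <;> simp [Equiv.embeddingCongr]
  obtain ⟨P, hP⟩ := exists_symm_eval.{u} N (F2 M) _ hT
  refine ⟨P, fun R _ _ _ x hx => ?_⟩
  have h := hP R (aeval (x 0) : k[X] →ₐ[k] R).toRingHom (fun i => x i.succ) (hx.F2_eq hM hN)
  simp only [AlgHom.toRingHom_eq_coe, RingHom.coe_coe] at h
  rw [← h, ← MvPolynomial.coe_eval₂Hom, map_prod]
  refine Finset.prod_congr rfl fun ι _ => ?_
  simp only [T]
  rw [MvPolynomial.aeval_def, MvPolynomial.aeval_def, MvPolynomial.hom_eval₂]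
  congr 1
  · ext a
    rw [RingHom.comp_apply, IsScalarTower.algebraMap_apply k k[X] (MvPolynomial (Fin N) k[X]),
      MvPolynomial.algebraMap_eq, MvPolynomial.coe_eval₂Hom, MvPolynomial.eval₂_C]
    simp
  · ext j
    refine Fin.cases ?_ (fun j => ?_) j <;> simp [tup]

end

/-! ### The degree of the norm -/

section
variable {k : Type u} [Field k]

/-- The roots of `M(Y) = M(1/z)` in the field of Laurent series in `z` are of the form `vᵢ / z`
with power series `vᵢ` having pairwise distinct constant coefficients. -/
lemma exists_infinity [IsAlgClosed k] {M : k[X]} {N : ℕ} (hM : M.Monic)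
    (hN : M.natDegree = N + 1) (hchar : ((N + 1 : ℕ) : k) ≠ 0) :
    ∃ v : Fin (N + 1) → PowerSeries k, v 0 = 1 ∧
      Function.Injective (fun i => PowerSeries.constantCoeff (v i)) ∧
      RootSys M (fun i => algebraMap (PowerSeries k) (FractionRing (PowerSeries k)) (v i) /
        algebraMap (PowerSeries k) (FractionRing (PowerSeries k)) PowerSeries.X) := by
  set G : (PowerSeries k)[X] := (M.map (algebraMap k (PowerSeries k))).scaleRoots PowerSeries.X
    with hG
  have hGm : G.Monic := by
    rw [hG, monic_scaleRoots_iff]; exact hM.map _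
  have hGd : G.natDegree = N + 1 := by
    rw [hG, natDegree_scaleRoots, hM.natDegree_map, hN]
  have hGc : G.map (PowerSeries.constantCoeff (R := k)) = X ^ (N + 1) := by
    rw [hG, map_scaleRoots _ _ _ (by rw [(hM.map _).leadingCoeff]; simp), Polynomial.map_map]
    simp [hN, hM.leadingCoeff]
  set f : (PowerSeries k)[X] := G - C (G.eval 1) with hf
  have hfd : f.natDegree = N + 1 := by rw [hf, natDegree_sub_C, hGd]
  have hfm : f.Monic := by
    apply hGm.sub_of_left
    rw [degree_eq_natDegree hGm.ne_zero, hGd]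
    exact lt_of_le_of_lt degree_C_le (by exact_mod_cast Nat.succ_pos N)
  have : NeZero ((N + 1 : ℕ) : k) := ⟨hchar⟩
  obtain ⟨ζ, hζ⟩ := HasEnoughRootsOfUnity.exists_primitiveRoot k (N + 1)
  have hinj : Function.Injective (fun i : Fin (N + 1) => ζ ^ i.val) := by
    intro i j hij
    exact Fin.ext (hζ.pow_inj i.2 j.2 hij)
  have hG1 : PowerSeries.constantCoeff (G.eval 1) = 1 := by
    have := eval₂_hom (p := G) (PowerSeries.constantCoeff (R := k)) 1
    rw [← this, ← eval_map, hGc]; simp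
  obtain ⟨v, hv1, hv2⟩ := hensel_list f hfm hfd (fun i => ζ ^ i.val) hinj (by
    intro i
    simp only [hf, Polynomial.map_sub, map_C, hGc, hG1]
    rw [eval_sub, eval_pow, eval_X, eval_C, ← pow_mul, mul_comm, pow_mul, hζ.pow_eq_one]
    simp)
  have hroot : ∀ i, G.eval (v i) = G.eval 1 := by
    intro i
    have : f.eval (v i) = 0 := by
      rw [hv2, eval_prod]
      exact Finset.prod_eq_zero (Finset.mem_univ i) (by simp)
    rw [hf, eval_sub, eval_C, sub_eq_zero] at this
    exact this
  have hv0 : v 0 = 1 := by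
    have : f.eval 1 = 0 := by simp [hf]
    rw [hv2, eval_prod, Finset.prod_eq_zero_iff] at this
    obtain ⟨i, -, hi⟩ := this
    simp only [eval_sub, eval_X, eval_C, sub_eq_zero] at hi
    have h1 := hv1 i
    rw [← hi, map_one] at h1
    have : i = 0 := hinj (by simp [← h1])
    rw [← this, hi]
  have hX : algebraMap (PowerSeries k) (FractionRing (PowerSeries k)) PowerSeries.X ≠ 0 := by
    rw [Ne, FaithfulSMul.algebraMap_eq_zero_iff]; exact PowerSeries.X_ne_zero
  have hinj2 : Function.Injective (fun i => PowerSeries.constantCoeff (v i)) := by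
    intro i j hij
    simp only [hv1] at hij
    exact hinj hij
  refine ⟨v, hv0, hinj2, ?_, ?_⟩
  · intro i j hij
    simp only [div_left_inj' hX] at hij
    have := IsFractionRing.injective (PowerSeries k) (FractionRing (PowerSeries k)) hij
    exact hinj2 (by simp only [this])
  · intro i
    have key : ∀ i, algebraMap (PowerSeries k) (FractionRing (PowerSeries k)) PowerSeries.X ^ (N + 1)
        * aeval (algebraMap (PowerSeries k) (FractionRing (PowerSeries k)) (v i) /
        algebraMap (PowerSeries k) (FractionRing (PowerSeries k)) PowerSeries.X) M =
        algebraMap _ _ (G.eval 1) := by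
      intro i
      have h := scaleRoots_eval₂_mul (p := M.map (algebraMap k (PowerSeries k)))
        (algebraMap (PowerSeries k) (FractionRing (PowerSeries k)))
        (algebraMap (PowerSeries k) (FractionRing (PowerSeries k)) (v i) /
        algebraMap (PowerSeries k) (FractionRing (PowerSeries k)) PowerSeries.X) PowerSeries.X
      rw [mul_div_cancel₀ _ hX, ← hG, eval₂_hom, hroot, hM.natDegree_map, hN, eval₂_map] at h
      rw [h, aeval_def, IsScalarTower.algebraMap_eq k (PowerSeries k)]
    exact mul_left_cancel₀ (pow_ne_zero (N + 1) hX) ((key i).trans (key 0).symm)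

/-- A polynomial of degree at most `D`, evaluated at elements with denominator `z`, has
denominator `z ^ D`. -/
lemma pole_mvPolynomial {σ : Type*} {Ω R : Type*} [CommRing R] [Field Ω] [Algebra k R] [Algebra R Ω]
    [Algebra k Ω] [IsScalarTower k R Ω] (z : R) (hz : algebraMap R Ω z ≠ 0) (v : σ → R)
    (φ : MvPolynomial σ k) (D : ℕ) (hD : φ.totalDegree ≤ D) :
    ∃ u : R, algebraMap R Ω z ^ D *
      MvPolynomial.aeval (fun i => algebraMap R Ω (v i) / algebraMap R Ω z) φ = algebraMap R Ω u := by
  classical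
  refine ⟨∑ c ∈ φ.support, algebraMap k R (φ.coeff c) * z ^ (D - c.sum fun _ e => e) *
    c.prod fun i e => v i ^ e, ?_⟩
  rw [MvPolynomial.aeval_def, MvPolynomial.eval₂_eq, Finset.mul_sum, map_sum]
  refine Finset.sum_congr rfl fun c hc => ?_
  have h1 : (c.sum fun _ e => e) ≤ D := (MvPolynomial.le_totalDegree hc).trans hD
  simp only [div_pow, Finset.prod_div_distrib, map_mul, map_pow, Finsupp.prod, map_prod]
  rw [Finset.prod_pow_eq_pow_sum, ← IsScalarTower.algebraMap_apply]
  have h2 : algebraMap R Ω z ^ D = algebraMap R Ω z ^ (D - c.sum fun _ e => e) *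
      algebraMap R Ω z ^ (c.sum fun _ e => e) := by
    rw [← pow_add, Nat.sub_add_cancel h1]
  have h3 : (∑ i ∈ c.support, c i) = c.sum fun _ e => e := rfl
  rw [h2, h3]
  field_simp

/-- A polynomial with a pole of order at most `D` at infinity has degree at most `D`. -/
lemma natDegree_le_of_pole {p : k[X]} {D : ℕ} {u : PowerSeries k}
    (h : algebraMap (PowerSeries k) (FractionRing (PowerSeries k)) PowerSeries.X ^ D *
      aeval (1 / algebraMap (PowerSeries k) (FractionRing (PowerSeries k)) PowerSeries.X) p =
        algebraMap _ _ u) : p.natDegree ≤ D := by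
  by_contra hlt
  push Not at hlt
  have hX : algebraMap (PowerSeries k) (FractionRing (PowerSeries k)) PowerSeries.X ≠ 0 := by
    rw [Ne, FaithfulSMul.algebraMap_eq_zero_iff]; exact PowerSeries.X_ne_zero
  let _ := invertibleOfNonzero hX
  have h2 := eval₂_reverse_mul_pow (algebraMap k (FractionRing (PowerSeries k)))
    (⅟ (algebraMap (PowerSeries k) (FractionRing (PowerSeries k)) PowerSeries.X)) p
  simp only [invOf_invOf] at h2
  rw [aeval_def, one_div, ← invOf_eq_inv, ← h2, invOf_eq_inv,
    IsScalarTower.algebraMap_eq k (PowerSeries k), ← eval₂_map, eval₂_hom] at h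
  have h3 : algebraMap (PowerSeries k) (FractionRing (PowerSeries k))
      ((p.reverse.map (algebraMap k (PowerSeries k))).eval PowerSeries.X) =
      algebraMap _ _ (PowerSeries.X ^ (p.natDegree - D) * u) := by
    rw [map_mul, ← h, map_pow]
    have h4 : algebraMap (PowerSeries k) (FractionRing (PowerSeries k)) PowerSeries.X ^ p.natDegree =
      algebraMap (PowerSeries k) (FractionRing (PowerSeries k)) PowerSeries.X ^ (p.natDegree - D) *
      algebraMap (PowerSeries k) (FractionRing (PowerSeries k)) PowerSeries.X ^ D := by
      rw [← pow_add, Nat.sub_add_cancel hlt.le]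
    have h5 : algebraMap (PowerSeries k) (FractionRing (PowerSeries k)) PowerSeries.X ^ p.natDegree
      ≠ 0 := pow_ne_zero _ hX
    rw [← mul_assoc, ← h4, inv_pow]
    field_simp
  have h6 := IsFractionRing.injective (PowerSeries k) (FractionRing (PowerSeries k)) h3
  have h7 := congrArg (PowerSeries.constantCoeff (R := k)) h6
  rw [map_mul, map_pow, PowerSeries.constantCoeff_X, zero_pow (by omega), zero_mul,
    ← eval₂_hom, eval₂_map, PowerSeries.constantCoeff_X, eval₂_at_zero] at h7
  have h8 : p.reverse.coeff 0 = 0 := by simpa using h7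
  rw [coeff_zero_reverse, leadingCoeff_eq_zero] at h8
  simp [h8] at hlt

/-- The degree of the norm of `φ`: in the expansion at infinity each of the factors has a pole of
order at most the degree of `φ`. -/
lemma natDegree_norm_le [IsAlgClosed k] {M : k[X]} {N : ℕ} (hM : M.Monic)
    (hN : M.natDegree = N + 1) (hchar : ((N + 1 : ℕ) : k) ≠ 0) {r : ℕ}
    {φ : MvPolynomial (Fin (r + 1)) k} {D : ℕ} (hD : φ.totalDegree ≤ D) {P : k[X]}
    (hP : ∀ (R : Type u) [CommRing R] [IsDomain R] [Algebra k R] (x : Fin (N + 1) → R),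
      RootSys M x → aeval (x 0) P = ∏ ι : Fin r ↪ Fin N, MvPolynomial.aeval (tup x ι) φ) :
    P.natDegree ≤ N.descFactorial r * D := by
  obtain ⟨v, hv0, hv1, hv⟩ := exists_infinity hM hN hchar
  have hX : algebraMap (PowerSeries k) (FractionRing (PowerSeries k)) PowerSeries.X ≠ 0 := by
    rw [Ne, FaithfulSMul.algebraMap_eq_zero_iff]; exact PowerSeries.X_ne_zero
  have h1 := hP _ _ hv
  have h2 : ∀ ι : Fin r ↪ Fin N, ∃ u : PowerSeries k,
      algebraMap (PowerSeries k) (FractionRing (PowerSeries k)) PowerSeries.X ^ D *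
      MvPolynomial.aeval (tup (fun i => algebraMap (PowerSeries k) (FractionRing (PowerSeries k))
        (v i) / algebraMap (PowerSeries k) (FractionRing (PowerSeries k)) PowerSeries.X) ι) φ =
      algebraMap _ _ u := by
    intro ι
    obtain ⟨u, hu⟩ := pole_mvPolynomial (Ω := FractionRing (PowerSeries k)) PowerSeries.X hX
      (tup v ι) φ D hD
    refine ⟨u, ?_⟩
    rw [← hu]
    congr 3
    funext j
    refine Fin.cases ?_ (fun j => ?_) j <;> simp [tup]
  choose u hu using h2
  refine natDegree_le_of_pole (u := ∏ ι, u ι) ?_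
  rw [map_prod]
  simp only [← hu]
  rw [Finset.prod_mul_distrib, ← h1, hv0, map_one]
  congr 1
  simp only [Finset.prod_const, Finset.card_univ, Fintype.card_embedding_eq, Fintype.card_fin]
  rw [← pow_mul, mul_comm]
end

/-! ### Irreducibility of the fibre product -/

section
variable {k : Type u} [Field k]

/-- A monic Morse polynomial of degree `N + 1`, with `N + 1` invertible, with the Morse conditions
expressed directly over `k` (to be used with `k` algebraically closed). -/
structure Morse (M : k[X]) (N : ℕ) : Prop where
  monic : M.Monic
  deg : M.natDegree = N + 1
  char : ((N + 1 : ℕ) : k) ≠ 0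
  simple : ∀ β, (derivative M).eval β = 0 → (derivative (derivative M)).eval β ≠ 0
  distinct : ∀ β β', (derivative M).eval β = 0 → (derivative M).eval β' = 0 →
    M.eval β = M.eval β' → β = β'

lemma F2_map_eval_mul (M : k[X]) (a : k) :
    (X - C a) * (F2 M).map (evalRingHom a) = M - C (M.eval a) := by
  have h := F2_map_mul M a
  have e : (aeval a : k[X] →ₐ[k] k).toRingHom = evalRingHom a := by
    ext <;> simp
  rw [e] at h
  simpa using h

lemma eval_map_evalRingHom (U : k[X][X]) (a b : k) :
    (U.map (evalRingHom a)).eval b = (U.eval (C b)).eval a := by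
  have := eval₂_hom (p := U) (evalRingHom a) (C b)
  simp only [coe_evalRingHom, eval_C] at this
  rw [eval_map, this]

/-- A singular point of the curve `F2 M = 0` cannot be a common point of two factors: the two
partial derivatives vanish there, so both coordinates are critical points with the same value. -/
lemma Morse.no_common_root {M : k[X]} {N : ℕ} (h : Morse M N) {U V : k[X][X]} (hUV : U * V = F2 M)
    {a b : k} (hU : (U.map (evalRingHom a)).eval b = 0) (hV : (V.map (evalRingHom a)).eval b = 0) :
    False := by
  have h1 := F2_map_eval_mul M a
  rw [← hUV, Polynomial.map_mul] at h1
  have h2 : (derivative M).eval b = 0 := by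
    have := congrArg (fun p => (derivative p).eval b) h1
    simpa [derivative_mul, hU, hV] using this.symm
  have h3 : M.eval b = M.eval a := by
    have := congrArg (fun p => p.eval b) h1
    simp only [eval_mul, hU, eval_sub, eval_C] at this
    linear_combination -this
  have h4 : (derivative M).eval a = 0 := by
    have h5 := congrArg (fun p => p.eval (C b)) (F2_mul M)
    simp only [← hUV, eval_mul, eval_sub, eval_X, eval_C] at h5
    rw [eval_map_evalRingHom] at hU hV
    have h6 := congrArg (fun p => (derivative p).eval a) h5
    have h7 : eval (C b) (M.map C) = C (M.eval b) := by
      rw [eval_map, eval₂_hom]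
    rw [h7] at h6
    simpa [derivative_mul, hU, hV] using h6.symm
  have h5 := h.distinct _ _ h2 h4 h3
  subst h5
  apply h.simple _ h2
  have := congrArg (fun p => (derivative (derivative p)).eval b) h1
  simpa [derivative_mul, hU, hV] using this.symm

/-- Irreducibility of `(M(Y) - M(X)) / (Y - X)` for a Morse polynomial. The resultant of two nontrivial
factors has a pole at infinity, as the roots are distinct there, so it is not constant and has a zero;
this gives a common point of the two factors, which is excluded by the Morse conditions. -/
lemma Morse.F2_irreducible [IsAlgClosed k] {M : k[X]} {N : ℕ} (h : Morse M N) (hN : 1 ≤ N) :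
    Irreducible (F2 M) := by
  rw [(F2_monic h.monic (by rw [h.deg]; omega)).irreducible_iff_natDegree]
  constructor
  · intro h1
    have := F2_natDegree h.monic h.deg
    rw [h1, natDegree_one] at this
    omega
  intro U V hU hV hUV
  by_contra hcon
  push Not at hcon
  obtain ⟨hU0, hV0⟩ := hcon
  obtain ⟨v, hv0, hv1, hv⟩ := exists_infinity h.monic h.deg h.char
  set Ω := FractionRing (PowerSeries k) with hΩ
  have hX : algebraMap (PowerSeries k) Ω PowerSeries.X ≠ 0 := by
    rw [Ne, FaithfulSMul.algebraMap_eq_zero_iff]; exact PowerSeries.X_ne_zero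
  set x : Fin (N + 1) → Ω := fun i => algebraMap (PowerSeries k) Ω (v i) /
    algebraMap (PowerSeries k) Ω PowerSeries.X with hx
  set g : k[X] →+* Ω := (aeval (x 0) : k[X] →ₐ[k] Ω).toRingHom with hg
  have hprod : U.map g * V.map g = ∏ i : Fin N, (X - C (x i.succ)) := by
    rw [← Polynomial.map_mul, hUV]
    exact hv.F2_eq h.monic h.deg
  have hne : (∏ i : Fin N, (X - C (x i.succ))) ≠ 0 :=
    (monic_prod_of_monic _ _ fun i _ => monic_X_sub_C _).ne_zero
  have hspl : (∏ i : Fin N, (X - C (x i.succ))).Splits :=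
    Splits.prod fun i _ => Splits.X_sub_C _
  have hsU : (U.map g).Splits := hspl.of_dvd hne (hprod ▸ dvd_mul_right _ _)
  have hsV : (V.map g).Splits := hspl.of_dvd hne (hprod ▸ dvd_mul_left _ _)
  have hroots : (U.map g).roots + (V.map g).roots = Finset.univ.val.map (fun i : Fin N => x i.succ) := by
    rw [← roots_mul (hprod ▸ hne), hprod, roots_prod _ _ hne]
    simp
  have hnd : ((U.map g).roots + (V.map g).roots).Nodup := by
    rw [hroots]
    exact Finset.univ.nodup.map (hv.inj.comp (Fin.succ_injective N))
  have hdis := (Multiset.nodup_add.mp hnd).2.2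
  have hmem : ∀ a ∈ (U.map g).roots + (V.map g).roots, ∃ i : Fin (N + 1), x i = a := by
    intro a ha
    rw [hroots, Multiset.mem_map] at ha
    obtain ⟨i, -, hi⟩ := ha
    exact ⟨i.succ, hi⟩
  have hres := resultant_eq_prod_roots_sub (U.map g) (V.map g) (hU.map _) (hV.map _) hsU hsV
  rw [hU.natDegree_map, hV.natDegree_map, resultant_map_map] at hres
  set S := Multiset.map (fun ij => ij.1 - ij.2) ((U.map g).roots ×ˢ (V.map g).roots) with hS
  have hcard : Multiset.card S = U.natDegree * V.natDegree := by
    rw [hS, Multiset.card_map, Multiset.card_product, ← hsU.natDegree_eq_card_roots,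
      ← hsV.natDegree_eq_card_roots, hU.natDegree_map, hV.natDegree_map]
  -- every difference of two roots has a simple pole at infinity
  have hSmem : ∀ s ∈ S, ∃ w : PowerSeries k, PowerSeries.constantCoeff w ≠ 0 ∧
      s = algebraMap _ Ω w / algebraMap (PowerSeries k) Ω PowerSeries.X := by
    intro s hs
    rw [hS, Multiset.mem_map] at hs
    obtain ⟨⟨a, b⟩, hab, rfl⟩ := hs
    rw [Multiset.mem_product] at hab
    obtain ⟨i, hi⟩ := hmem a (Multiset.mem_add.mpr (Or.inl hab.1))
    obtain ⟨j, hj⟩ := hmem b (Multiset.mem_add.mpr (Or.inr hab.2))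
    refine ⟨v i - v j, ?_, ?_⟩
    · rw [map_sub, sub_ne_zero]
      intro e
      have := hv1 e
      subst this
      exact Multiset.disjoint_left.mp hdis hab.1 (by rw [← hi, hj]; exact hab.2)
    · simp only [← hi, ← hj, hx, map_sub]
      ring
  have hSprod : ∀ T : Multiset Ω, (∀ s ∈ T, ∃ w : PowerSeries k, PowerSeries.constantCoeff w ≠ 0 ∧
      s = algebraMap _ Ω w / algebraMap (PowerSeries k) Ω PowerSeries.X) →
      ∃ w : PowerSeries k, PowerSeries.constantCoeff w ≠ 0 ∧
      algebraMap (PowerSeries k) Ω PowerSeries.X ^ Multiset.card T * T.prod = algebraMap _ Ω w := by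
    intro T
    induction T using Multiset.induction with
    | empty => intro _; exact ⟨1, by simp, by simp⟩
    | cons s T ih =>
      intro hT
      obtain ⟨w, hw, hw2⟩ := ih fun s hs => hT s (Multiset.mem_cons_of_mem hs)
      obtain ⟨w', hw', hw2'⟩ := hT s (Multiset.mem_cons_self _ _)
      refine ⟨w' * w, by simp [hw, hw'], ?_⟩
      rw [Multiset.card_cons, Multiset.prod_cons, map_mul, ← hw2, hw2', pow_succ]
      have e := mul_div_cancel₀ (algebraMap _ Ω w') hX
      linear_combination (algebraMap (PowerSeries k) Ω PowerSeries.X ^ Multiset.card T * T.prod) * e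
  -- hence the resultant has a pole at infinity
  obtain ⟨w, hw, hw2⟩ := hSprod S hSmem
  rw [← hres] at hw2
  have hdeg : (U.resultant V).degree ≠ 0 := by
    intro hd
    rw [eq_C_of_degree_eq_zero hd, hcard] at hw2
    have h3 : algebraMap (PowerSeries k) Ω (PowerSeries.X ^ (U.natDegree * V.natDegree) *
        algebraMap k _ ((U.resultant V).coeff 0)) = algebraMap (PowerSeries k) Ω w := by
      rw [← hw2, map_mul, map_pow, hg, ← IsScalarTower.algebraMap_apply]
      simp
    have h4 := IsFractionRing.injective (PowerSeries k) Ω h3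
    apply hw
    rw [← h4, map_mul, map_pow, PowerSeries.constantCoeff_X, zero_pow (mul_ne_zero hU0 hV0),
      zero_mul]
  obtain ⟨a, ha⟩ := IsAlgClosed.exists_root _ hdeg
  have h5 : (U.map (evalRingHom a)).resultant (V.map (evalRingHom a)) = 0 := by
    rw [hU.natDegree_map, hV.natDegree_map, resultant_map_map]
    exact ha
  rw [resultant_eq_zero_iff, isCoprime_iff_aeval_ne_zero_of_isAlgClosed k k] at h5
  obtain ⟨-, h5⟩ := h5
  push Not at h5
  obtain ⟨b, hb1, hb2⟩ := h5
  exact h.no_common_root hUV (a := a) (b := b) (by simpa using hb1) (by simpa using hb2)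

end

/-! ### Roots near a critical point -/

section
variable {k : Type u} [Field k]

/-- Substitution of a power series without constant term. -/
lemma exists_subst (a : PowerSeries k) (ha : PowerSeries.constantCoeff a = 0) :
    ∃ κ : PowerSeries k →ₐ[k] PowerSeries k, κ PowerSeries.X = a ∧
      ∀ f, PowerSeries.constantCoeff (κ f) = PowerSeries.constantCoeff f := by
  have hX := PowerSeries.substAlgHom_X (R := k) (PowerSeries.HasSubst.of_constantCoeff_zero' ha)
  refine ⟨PowerSeries.substAlgHom (PowerSeries.HasSubst.of_constantCoeff_zero' ha), hX, fun f => ?_⟩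
  obtain ⟨g, hg⟩ : PowerSeries.X ∣ f - PowerSeries.C (PowerSeries.constantCoeff f) := by
    rw [PowerSeries.X_dvd_iff]; simp
  have h1 : f = algebraMap k (PowerSeries k) (PowerSeries.constantCoeff f) + PowerSeries.X * g := by
    rw [← hg]; simp
  generalize PowerSeries.constantCoeff f = c at h1 ⊢
  set κ : PowerSeries k →ₐ[k] PowerSeries k :=
    PowerSeries.substAlgHom (PowerSeries.HasSubst.of_constantCoeff_zero' ha)
  change κ PowerSeries.X = a at hX
  change PowerSeries.constantCoeff (κ f) = c
  rw [h1, map_add, AlgHom.commutes, map_mul, hX, map_add, map_mul, ha, zero_mul, add_zero]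
  simp

lemma aeval_shift (β : k) (p : k[X]) :
    aeval (PowerSeries.C β + PowerSeries.X : PowerSeries k) p =
      ((taylor β p : k[X]) : PowerSeries k) := by
  have h : ∀ g : k[X], (g : PowerSeries k) = (coeToPowerSeries.ringHom g) := fun g => rfl
  rw [taylor_apply, comp, h, hom_eval₂, aeval_def]
  congr 1
  · refine RingHom.ext fun c => ?_
    rw [RingHom.comp_apply, ← h, coe_C]
    rfl
  · rw [← h, coe_add, coe_X, coe_C, add_comm]

lemma aeval_shift_ne_zero (β : k) {p : k[X]} (hp : p ≠ 0) :
    aeval (PowerSeries.C β + PowerSeries.X : PowerSeries k) p ≠ 0 := by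
  rw [aeval_shift, Ne, coe_eq_zero_iff]
  simpa using hp

lemma constantCoeff_aeval_shift (β : k) (p : k[X]) :
    PowerSeries.constantCoeff (aeval (PowerSeries.C β + PowerSeries.X : PowerSeries k) p) =
      p.eval β := by
  rw [aeval_def, hom_eval₂]
  simp only [map_add, PowerSeries.constantCoeff_C, PowerSeries.constantCoeff_X, add_zero]
  rw [← eval₂_id]
  congr 1

lemma F2_map_eval_self (M : k[X]) {R : Type*} [CommRing R] [Algebra k R] (y : R) :
    ((F2 M).map (aeval y : k[X] →ₐ[k] R).toRingHom).eval y = aeval y (derivative M) := by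
  have h := congrArg (fun p => (derivative p).eval y) (F2_map_mul M y)
  simpa [derivative_mul, derivative_map, eval_map_algebraMap] using h

lemma F2_map_eval_hom (M : k[X]) {R S : Type*} [CommRing R] [Algebra k R] [CommRing S]
    [Algebra k S] (κ : R →ₐ[k] S) (y w : R) :
    κ (((F2 M).map (aeval y : k[X] →ₐ[k] R).toRingHom).eval w) =
      ((F2 M).map (aeval (κ y) : k[X] →ₐ[k] S).toRingHom).eval (κ w) := by
  have := eval₂_hom (p := (F2 M).map (aeval y : k[X] →ₐ[k] R).toRingHom) κ.toRingHom w
  simp only [AlgHom.toRingHom_eq_coe, RingHom.coe_coe] at this ⊢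
  rw [← this, eval₂_map, eval_map]
  congr 1
  ext <;> simp

lemma derivative_ne_zero_of {M : k[X]} {N : ℕ} (h : Morse M N) : derivative M ≠ 0 := by
  intro h0
  have := congrArg (fun p => p.coeff N) h0
  simp only [coeff_derivative, coeff_zero] at this
  rw [← h.deg, h.monic.coeff_natDegree, one_mul] at this
  exact h.char (by push_cast; exact this)

lemma exists_critical [IsAlgClosed k] {M : k[X]} {N : ℕ} (h : Morse M N) (hN : 1 ≤ N) :
    ∃ β, (derivative M).eval β = 0 := by
  apply IsAlgClosed.exists_root
  intro hd
  have := congrArg (fun p => p.coeff N) (eq_C_of_degree_eq_zero hd)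
  simp only [coeff_derivative, coeff_C] at this
  rw [← h.deg, h.monic.coeff_natDegree, one_mul, if_neg (by omega)] at this
  exact h.char (by push_cast; exact this)

/-- Roots near a critical point `β`: with `y = β + s`, all roots of `M(Y) = M(y)` are power series
in `s`, and the substitution `s ↦ x_b - β`, where `x_b` is the other root reducing to `β`,
exchanges `x_0 = y` and `x_b` and fixes the remaining roots. -/
lemma exists_finite [IsAlgClosed k] {M : k[X]} {N : ℕ} (h : Morse M N) (hN : 1 ≤ N) :
    ∃ (β : k) (x : Fin (N + 1) → PowerSeries k), x 0 = PowerSeries.C β + PowerSeries.X ∧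
      RootSys M x ∧ ∃ (κ : PowerSeries k →ₐ[k] PowerSeries k) (b : Fin (N + 1)), b ≠ 0 ∧
        ∀ i, κ (x i) = x (Equiv.swap 0 b i) := by
  classical
  obtain ⟨β, hβ⟩ := exists_critical h hN
  set y : PowerSeries k := PowerSeries.C β + PowerSeries.X with hy
  set F := (F2 M).map (aeval y : k[X] →ₐ[k] PowerSeries k).toRingHom with hF
  have hFm : F.Monic := (F2_monic h.monic (by rw [h.deg]; omega)).map _
  have hFd : F.natDegree = N := by
    rw [hF, (F2_monic h.monic (by rw [h.deg]; omega)).natDegree_map, F2_natDegree h.monic h.deg]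
  set Q := (F2 M).map (evalRingHom β) with hQ
  have hFQ : F.map (PowerSeries.constantCoeff (R := k)) = Q := by
    rw [hF, hQ, Polynomial.map_map]
    congr 1
    refine RingHom.ext fun p => ?_
    simp only [RingHom.comp_apply, AlgHom.toRingHom_eq_coe, RingHom.coe_coe, coe_evalRingHom]
    exact constantCoeff_aeval_shift β p
  have hQm : Q.Monic := (F2_monic h.monic (by rw [h.deg]; omega)).map _
  have hQd : Q.natDegree = N := by
    rw [hQ, (F2_monic h.monic (by rw [h.deg]; omega)).natDegree_map, F2_natDegree h.monic h.deg]
  have hQmul : (X - C β) * Q = M - C (M.eval β) := F2_map_eval_mul M β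
  have hQsep : ∀ b, Q.eval b = 0 → (derivative Q).eval b ≠ 0 := by
    intro b hb hb'
    have h2 : (derivative M).eval b = 0 := by
      have := congrArg (fun p => (derivative p).eval b) hQmul
      simpa [derivative_mul, hb, hb'] using this.symm
    have h3 : M.eval b = M.eval β := by
      have := congrArg (fun p => p.eval b) hQmul
      simp only [eval_mul, hb, eval_sub, eval_C] at this
      linear_combination -this
    have h5 := h.distinct _ _ h2 hβ h3
    subst h5
    apply h.simple _ h2
    have := congrArg (fun p => (derivative (derivative p)).eval b) hQmul
    simpa [derivative_mul, hb, hb'] using this.symm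
  have hQβ : Q.eval β = 0 := by
    have := congrArg (fun p => (derivative p).eval β) hQmul
    simpa [derivative_mul, hβ] using this
  have hcard : Q.roots.toFinset.card = N := by
    rw [Multiset.toFinset_card_of_nodup, ← (IsAlgClosed.splits Q).natDegree_eq_card_roots, hQd]
    rw [nodup_roots_iff_of_splits hQm.ne_zero (IsAlgClosed.splits Q)]
    rw [Separable, isCoprime_iff_aeval_ne_zero_of_isAlgClosed k k]
    intro a
    by_cases ha : Q.eval a = 0
    · right; simpa using hQsep a ha
    · left; simpa using ha
  let e := Finset.equivFinOfCardEq hcard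
  set r : Fin N → k := fun i => (e.symm i : k) with hr
  have hrinj : Function.Injective r := Subtype.val_injective.comp e.symm.injective
  have hrroot : ∀ i, Q.eval (r i) = 0 := by
    intro i
    have := (e.symm i).2
    rw [Multiset.mem_toFinset, mem_roots hQm.ne_zero] at this
    exact this
  obtain ⟨i0, hi0⟩ : ∃ i0, r i0 = β := by
    refine ⟨e ⟨β, ?_⟩, by simp [hr]⟩
    rw [Multiset.mem_toFinset, mem_roots hQm.ne_zero]
    exact hQβ
  obtain ⟨ρ, hρ1, hρ2⟩ := hensel_list F hFm hFd r hrinj (by rw [hFQ]; exact hrroot)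
  have hρroot : ∀ i, F.eval (ρ i) = 0 := by
    intro i
    rw [hρ2, eval_prod]
    exact Finset.prod_eq_zero (Finset.mem_univ i) (by simp)
  have hρM : ∀ i, aeval (ρ i) M = aeval y M := by
    intro i
    have := congrArg (fun p => p.eval (ρ i)) (F2_map_mul M y)
    rw [← hF] at this
    simp only [eval_mul, hρroot, eval_sub, eval_C, mul_zero, eval_map_algebraMap] at this
    linear_combination -this
  set x : Fin (N + 1) → PowerSeries k := Fin.cons y ρ with hx
  have hxr : RootSys M x := by
    refine ⟨Fin.cons_injective_iff.mpr ⟨?_, ?_⟩, ?_⟩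
    · rintro ⟨i, hi⟩
      have h1 := hρroot i
      rw [hi, hF, F2_map_eval_self] at h1
      exact aeval_shift_ne_zero β (derivative_ne_zero_of h) h1
    · intro i j hij
      apply hrinj
      rw [← hρ1, ← hρ1, hij]
    · intro i
      refine Fin.cases rfl (fun j => ?_) i
      simp [hx, hρM]
  obtain ⟨κ, hκ1, hκ2⟩ := exists_subst (ρ i0 - PowerSeries.C β) (by simp [hρ1, hi0])
  have hκC : ∀ c, κ (PowerSeries.C c) = PowerSeries.C c := fun c => κ.commutes c
  have hκy : κ y = ρ i0 := by
    rw [hy, map_add, hκ1, hκC]; ring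
  -- `κ` permutes the roots
  have hκroot : ∀ j, ∃ l, κ (ρ j) = x l := by
    intro j
    have h1 : aeval (κ (ρ j)) M = aeval (x 0) M := by
      rw [aeval_algHom_apply, hρM, ← aeval_algHom_apply, hκy, hρM]; rfl
    have h2 := congrArg (fun p => p.eval (κ (ρ j))) (hxr.prod_eq h.monic h.deg)
    simp only [eval_sub, eval_map_algebraMap, h1, eval_C, sub_self, eval_prod, eval_X] at h2
    obtain ⟨l, -, hl⟩ := Finset.prod_eq_zero_iff.mp h2.symm
    exact ⟨l, sub_eq_zero.mp hl⟩
  refine ⟨β, x, rfl, hxr, κ, i0.succ, Fin.succ_ne_zero _, fun i => ?_⟩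
  refine Fin.cases ?_ (fun j => ?_) i
  · rw [Equiv.swap_apply_left]; simpa [hx] using hκy
  · by_cases hj : j = i0
    · subst hj
      rw [Equiv.swap_apply_right]
      obtain ⟨l, hl⟩ := hκroot j
      have hc : PowerSeries.constantCoeff (x l) = β := by rw [← hl, hκ2, hρ1, hi0]
      simp only [hx, Fin.cons_succ]
      rw [hl]
      revert hl hc
      refine Fin.cases (fun _ _ => by simp [hx]) (fun m hl hc => ?_) l
      exfalso
      simp only [hx, Fin.cons_succ, hρ1] at hc hl
      have hm : m = j := hrinj (by rw [hc, hi0])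
      rw [hm] at hl
      have h1 := congrArg κ (hρroot j)
      rw [hF, F2_map_eval_hom, hκy, hl, map_zero, F2_map_eval_self] at h1
      exact hxr.derivative_ne_zero h.monic h.deg j.succ (by simpa [hx] using h1)
    · rw [Equiv.swap_apply_of_ne_of_ne (Fin.succ_ne_zero _) (by simpa using hj)]
      obtain ⟨l, hl⟩ := hκroot j
      have hc : PowerSeries.constantCoeff (x l) = r j := by rw [← hl, hκ2, hρ1]
      simp only [hx, Fin.cons_succ]
      rw [hl]
      revert hl hc
      refine Fin.cases (fun hl hc => ?_) (fun m hl hc => ?_) l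
      · exfalso
        apply hj
        apply hrinj
        rw [hi0, ← hc]
        simp [hx, hy]
      · simp only [hx, Fin.cons_succ, hρ1] at hc ⊢
        rw [hrinj hc]

end

/-! ### Symmetry of the relations between the roots -/

/-- The Galois group of an irreducible polynomial acts transitively on its roots, in terms of
polynomial relations between the roots. -/
lemma galois_perm {K Ω : Type*} [Field K] [Field Ω] [Algebra K Ω] {f : K[X]} (hirr : Irreducible f)
    (hfm : f.Monic) {N : ℕ} {x : Fin N → Ω} (hx : Function.Injective x)
    (hf : f.map (algebraMap K Ω) = ∏ i, (X - C (x i))) (i j : Fin N) :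
    ∃ g : Equiv.Perm (Fin N), g i = j ∧ ∀ φ : MvPolynomial (Fin N) K,
      MvPolynomial.aeval x φ = 0 ↔ MvPolynomial.aeval (x ∘ g) φ = 0 := by
  have hspl : (f.map (algebraMap K Ω)).Splits := by
    rw [hf]; exact Splits.prod fun i _ => Splits.X_sub_C _
  have := IntermediateField.adjoin_rootSet_isSplittingField hspl
  set L := IntermediateField.adjoin K (f.rootSet Ω) with hL
  have hN : Normal K L := Normal.of_isSplittingField f
  have hroot : ∀ a : Ω, aeval a f = 0 → ∃ l, a = x l := by
    intro a ha
    rw [← eval_map_algebraMap, hf, eval_prod, Finset.prod_eq_zero_iff] at ha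
    obtain ⟨l, -, hl⟩ := ha
    exact ⟨l, by simpa [sub_eq_zero] using hl⟩
  have hxroot : ∀ l, aeval (x l) f = 0 := by
    intro l
    rw [← eval_map_algebraMap, hf, eval_prod]
    exact Finset.prod_eq_zero (Finset.mem_univ l) (by simp)
  have hmem : ∀ l, x l ∈ L := by
    intro l
    apply IntermediateField.subset_adjoin
    rw [mem_rootSet]
    exact ⟨hfm.ne_zero, hxroot l⟩
  set x' : Fin N → L := fun l => ⟨x l, hmem l⟩ with hx'
  have hLv : ∀ a : L, L.val a = 0 ↔ a = 0 := fun a => map_eq_zero L.val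
  have hval : ∀ a : L, aeval a f = 0 ↔ aeval (a : Ω) f = 0 := by
    intro a
    have : aeval (a : Ω) f = L.val (aeval a f) := (aeval_algHom_apply L.val a f)
    rw [this, hLv]
  have hx'root : ∀ l, aeval (x' l) f = 0 := fun l => (hval _).mpr (hxroot l)
  have hmin : f = minpoly K (x' j) := minpoly.eq_of_irreducible_of_monic hirr (hx'root j) hfm
  obtain ⟨σ, hσ⟩ := minpoly.exists_algEquiv_of_root (K := K) (L := L) (x := x' i) (y := x' j)
    ⟨f, hfm.ne_zero, hx'root j⟩ (by rw [← hmin]; exact hx'root i)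
  have key : ∀ l, ∃ m, σ (x' l) = x' m := by
    intro l
    have : aeval (σ (x' l)) f = 0 := by
      have := aeval_algHom_apply (σ : L →ₐ[K] L) (x' l) f
      rw [hx'root, map_zero] at this
      exact this
    obtain ⟨m, hm⟩ := hroot _ ((hval _).mp this)
    exact ⟨m, Subtype.ext hm⟩
  choose g hg using key
  have hx'inj : Function.Injective x' := fun a b hab => hx (congrArg Subtype.val hab)
  have hginj : Function.Injective g := by
    intro a b hab
    apply hx'inj
    apply σ.injective
    rw [hg, hg, hab]
  refine ⟨Equiv.ofBijective g (Finite.injective_iff_bijective.mp hginj), ?_, fun φ => ?_⟩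
  · apply hx'inj
    simp only [Equiv.ofBijective_apply]
    rw [← hg, hσ]
  · have h1 : MvPolynomial.aeval x φ = L.val (MvPolynomial.aeval x' φ) := by
      rw [← AlgHom.comp_apply, MvPolynomial.comp_aeval]; rfl
    have h2 : MvPolynomial.aeval (x ∘ g) φ =
        L.val ((σ : L →ₐ[K] L) (MvPolynomial.aeval x' φ)) := by
      rw [← AlgHom.comp_apply, ← AlgHom.comp_apply, MvPolynomial.comp_aeval]
      congr 2
      funext l
      exact congrArg Subtype.val (hg l).symm
    have h3 : (x ∘ ⇑(Equiv.ofBijective g (Finite.injective_iff_bijective.mp hginj))) = x ∘ g := rfl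
    rw [h3, h1, h2, hLv, hLv]
    exact (map_eq_zero (σ : L →ₐ[K] L)).symm

section
variable {k : Type u} [Field k]

/-- The group of permutations preserving the algebraic relations over `k` between the entries of a
tuple, as a submonoid. -/
def relMonoid {R : Type*} [CommRing R] [Algebra k R] {n : ℕ} (x : Fin n → R) :
    Submonoid (Equiv.Perm (Fin n)) where
  carrier := {π | ∀ φ : MvPolynomial (Fin n) k,
    MvPolynomial.aeval x φ = 0 → MvPolynomial.aeval (x ∘ π) φ = 0}
  one_mem' := fun φ h => h
  mul_mem' := by
    intro π τ hπ hτ φ h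
    have h1 := hτ φ h
    have h2 := hπ (MvPolynomial.rename τ φ) (by rw [MvPolynomial.aeval_rename]; exact h1)
    rw [MvPolynomial.aeval_rename] at h2
    exact h2

/-- The monodromy group is the full symmetric group: it contains the transposition `(0 b)` and, as
`F2 M` is irreducible, permutations fixing `0` and moving `b` to any other nonzero index; conjugation
yields all transpositions. -/
lemma relMonoid_eq_top [IsAlgClosed k] {M : k[X]} {N : ℕ} (h : Morse M N) (hN : 1 ≤ N)
    {β : k} {x : Fin (N + 1) → PowerSeries k} (hx0 : x 0 = PowerSeries.C β + PowerSeries.X)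
    (hx : RootSys M x) {κ : PowerSeries k →ₐ[k] PowerSeries k} {b : Fin (N + 1)} (hb : b ≠ 0)
    (hκ : ∀ i, κ (x i) = x (Equiv.swap 0 b i)) : relMonoid (k := k) x = ⊤ := by
  have hswap : Equiv.swap 0 b ∈ relMonoid (k := k) x := by
    intro φ hφ
    have h1 := congrArg κ hφ
    rw [map_zero, ← AlgHom.comp_apply, MvPolynomial.comp_aeval] at h1
    rw [← h1]
    congr 2
    funext i
    exact (hκ i).symm
  -- the Galois group of `F2 M` over `k(X)` permutes the roots other than `x 0` transitively
  have hgal : ∀ j : Fin (N + 1), j ≠ 0 → ∃ g : Equiv.Perm (Fin (N + 1)),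
      g ∈ relMonoid (k := k) x ∧ g⁻¹ ∈ relMonoid (k := k) x ∧ g 0 = 0 ∧ g b = j := by
    intro j hj
    obtain ⟨b', rfl⟩ := Fin.exists_succ_eq.mpr hb
    obtain ⟨j', rfl⟩ := Fin.exists_succ_eq.mpr hj
    let Ω := FractionRing (PowerSeries k)
    let θ : k[X] →+* Ω := (algebraMap (PowerSeries k) Ω).comp
      (aeval (x 0) : k[X] →ₐ[k] PowerSeries k).toRingHom
    have hθ : Function.Injective θ := by
      refine (IsFractionRing.injective (PowerSeries k) Ω).comp ?_
      change Function.Injective (aeval (x 0) : k[X] →ₐ[k] PowerSeries k)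
      rw [injective_iff_map_eq_zero]
      intro p hp
      by_contra hp0
      apply aeval_shift_ne_zero β hp0
      rw [hx0] at hp
      exact hp
    let K := FractionRing k[X]
    let _ : Algebra K Ω := (IsFractionRing.lift hθ).toAlgebra
    have hKΩ : ∀ p : k[X], algebraMap K Ω (algebraMap k[X] K p) = θ p :=
      fun p => IsFractionRing.lift_algebraMap hθ p
    set f : K[X] := (F2 M).map (algebraMap k[X] K) with hf
    have hF2m := F2_monic h.monic (by rw [h.deg]; omega)
    have hfm : f.Monic := hF2m.map _
    have hirr : Irreducible f :=
      (hF2m.irreducible_iff_irreducible_map_fraction_map (K := K)).mp (h.F2_irreducible hN)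
    set z : Fin N → Ω := fun i => algebraMap _ Ω (x i.succ) with hz
    have hzinj : Function.Injective z := (IsFractionRing.injective (PowerSeries k) Ω).comp
      (hx.inj.comp (Fin.succ_injective N))
    have hprod : f.map (algebraMap K Ω) = ∏ i, (X - C (z i)) := by
      rw [hf, Polynomial.map_map]
      have e : (algebraMap K Ω).comp (algebraMap k[X] K) = θ := RingHom.ext hKΩ
      rw [e, ← Polynomial.map_map, hx.F2_eq h.monic h.deg]
      simp [Polynomial.map_prod, hz]
    obtain ⟨g, hg1, hg2⟩ := galois_perm hirr hfm hzinj hprod b' j'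
    set π : Equiv.Perm (Fin (N + 1)) := Equiv.Perm.decomposeFin.symm (0, g) with hπ
    have hπ0 : π 0 = 0 := by simp [hπ]
    have hπs : ∀ i : Fin N, π i.succ = (g i).succ := by intro i; simp [hπ]
    -- a relation over `k` between all roots is a relation over `k(X)` between the others
    have key : ∀ φ : MvPolynomial (Fin (N + 1)) k,
        MvPolynomial.aeval x φ = 0 ↔ MvPolynomial.aeval (x ∘ π) φ = 0 := by
      intro φ
      let ψ : MvPolynomial (Fin N) K := MvPolynomial.aeval
        (Fin.cons (MvPolynomial.C (algebraMap k[X] K X)) MvPolynomial.X) φ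
      have hψ : ∀ w : Fin (N + 1) → PowerSeries k, w 0 = x 0 →
          MvPolynomial.aeval (fun i : Fin N => algebraMap _ Ω (w i.succ)) ψ =
            algebraMap _ Ω (MvPolynomial.aeval w φ) := by
        intro w hw
        simp only [ψ]
        rw [MvPolynomial.aeval_def, MvPolynomial.aeval_def, MvPolynomial.aeval_def,
          ← MvPolynomial.coe_eval₂Hom, MvPolynomial.hom_eval₂, MvPolynomial.hom_eval₂]
        congr 1
        · refine RingHom.ext fun c => ?_
          have e1 : algebraMap k (MvPolynomial (Fin N) K) c =
              MvPolynomial.C (algebraMap k[X] K (C c)) := by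
            rw [IsScalarTower.algebraMap_apply k K, IsScalarTower.algebraMap_apply k k[X] K]
            rfl
          rw [RingHom.comp_apply, e1, MvPolynomial.coe_eval₂Hom, MvPolynomial.eval₂_C, hKΩ]
          simp [θ]
        · funext i
          refine Fin.cases ?_ (fun i => ?_) i
          · simp only [Fin.cons_zero, MvPolynomial.coe_eval₂Hom,
              MvPolynomial.eval₂_C, hKΩ]
            simp [θ, hw]
          · simp
      have h0 : ∀ a : PowerSeries k, a = 0 ↔ algebraMap _ Ω a = 0 := fun a =>
        (map_eq_zero_iff _ (IsFractionRing.injective (PowerSeries k) Ω)).symm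
      rw [h0, h0 (MvPolynomial.aeval (x ∘ π) φ), ← hψ x rfl, ← hψ (x ∘ π) (by simp [hπ0])]
      have e2 : (fun i : Fin N => algebraMap _ Ω ((x ∘ π) i.succ)) = z ∘ g := by
        funext i; simp [hπs, hz]
      rw [e2]
      exact hg2 ψ
    refine ⟨π, fun φ hφ => (key φ).mp hφ, fun φ hφ => ?_, hπ0, by rw [hπs, hg1]⟩
    have h1 := (key (MvPolynomial.rename ⇑π⁻¹ φ)).mpr (by
      rw [MvPolynomial.aeval_rename]
      have : (x ∘ π) ∘ ⇑π⁻¹ = x := by funext i; simp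
      rw [this]; exact hφ)
    rwa [MvPolynomial.aeval_rename] at h1
  -- conjugating `(0 b)` by such a permutation gives `(0 j)`
  have hswap0 : ∀ j, Equiv.swap 0 j ∈ relMonoid (k := k) x := by
    intro j
    by_cases hj : j = 0
    · subst hj; rw [Equiv.swap_self]; exact Submonoid.one_mem _
    obtain ⟨g, hg1, hg2, hg3, hg4⟩ := hgal j hj
    have := Equiv.swap_apply_apply g 0 b
    rw [hg3, hg4] at this
    rw [this]
    exact Submonoid.mul_mem _ (Submonoid.mul_mem _ hg1 hswap) hg2
  rw [eq_top_iff, ← Equiv.Perm.mclosure_isSwap, Submonoid.closure_le]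
  rintro π ⟨i, j, hij, rfl⟩
  by_cases hi : i = 0
  · subst hi; exact hswap0 j
  by_cases hj : j = 0
  · subst hj; rw [Equiv.swap_comm]; exact hswap0 i
  have := Equiv.swap_apply_apply (Equiv.swap 0 i) 0 j
  rw [Equiv.swap_apply_left, Equiv.swap_apply_of_ne_of_ne hj (Ne.symm hij), Equiv.swap_inv] at this
  rw [this]
  exact Submonoid.mul_mem _ (Submonoid.mul_mem _ (hswap0 i) (hswap0 j)) (hswap0 i)

end

/-! ### Reduced monomials -/

/-- Combinatorial Nullstellensatz for injective tuples: a polynomial of degree less than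
`#s - i` in its `i`-th variable which vanishes at all injective tuples from `s` is zero. -/
lemma eq_zero_of_eval_injective {R : Type*} [CommRing R] [IsDomain R] {m : ℕ} (s : Finset R)
    (φ : MvPolynomial (Fin m) R) (hdeg : ∀ i : Fin m, φ.degreeOf i + i < s.card)
    (h0 : ∀ w : Fin m → R, Function.Injective w → (∀ i, w i ∈ s) → MvPolynomial.eval w φ = 0) :
    φ = 0 := by
  classical
  induction m generalizing s with
  | zero =>
    have h1 := h0 0 (Function.injective_of_subsingleton _) (fun i => i.elim0)
    rw [MvPolynomial.eq_C_of_isEmpty φ] at h1 ⊢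
    rw [MvPolynomial.eval_C] at h1
    rw [h1, MvPolynomial.C_0]
  | succ m ih =>
    have key : ∀ a ∈ s, (MvPolynomial.finSuccEquiv R m φ).eval (MvPolynomial.C a) = 0 := by
      intro a ha
      refine ih (s.erase a) _ (fun i => ?_) fun w hw hws => ?_
      · have h1 := hdeg i.succ
        rw [Finset.card_erase_of_mem ha]
        have h2 : MvPolynomial.degreeOf i
            ((MvPolynomial.finSuccEquiv R m φ).eval (MvPolynomial.C a)) ≤
              MvPolynomial.degreeOf i.succ φ := by
          rw [eval_eq_sum, Polynomial.sum]
          refine (MvPolynomial.degreeOf_sum_le _ _ _).trans (Finset.sup_le fun l _ => ?_)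
          rw [← map_pow]
          exact (MvPolynomial.degreeOf_mul_C_le _ _ _).trans
            (MvPolynomial.degreeOf_coeff_finSuccEquiv _ _ _)
        rw [Fin.val_succ] at h1
        omega
      · rw [MvPolynomial.eval_polynomial_eval_finSuccEquiv]
        apply h0
        · intro i j hij
          refine Fin.cases (fun hij => ?_) (fun i hij => ?_) i hij <;>
          refine Fin.cases (fun hij => ?_) (fun j hij => ?_) j hij
          · rfl
          · simp only [Fin.cases_zero, Fin.cases_succ, MvPolynomial.eval_C] at hij
            exact absurd hij.symm (Finset.ne_of_mem_erase (hws j))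
          · simp only [Fin.cases_zero, Fin.cases_succ, MvPolynomial.eval_C] at hij
            exact absurd hij (Finset.ne_of_mem_erase (hws i))
          · simp only [Fin.cases_succ] at hij
            rw [hw hij]
        · intro i
          refine Fin.cases ?_ (fun i => ?_) i
          · simpa using ha
          · simpa using Finset.mem_of_mem_erase (hws i)
    apply (MvPolynomial.finSuccEquiv R m).injective
    rw [map_zero]
    refine Polynomial.eq_zero_of_natDegree_lt_card_of_eval_eq_zero' _ (s.image MvPolynomial.C) ?_ ?_
    · intro b hb
      obtain ⟨a, ha, rfl⟩ := Finset.mem_image.mp hb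
      exact key a ha
    · rw [Finset.card_image_of_injective _ (MvPolynomial.C_injective _ _),
        MvPolynomial.natDegree_finSuccEquiv]
      simpa using hdeg 0

/-- Exponents of the reduced monomials: the exponent of `X₀` is at most `A`, and that of `X_{j+1}`
is less than `N - j`. -/
abbrev Red (N r A : ℕ) : Type := Fin (A + 1) × (∀ j : Fin r, Fin (N - j))

lemma card_Red (N r A : ℕ) : Fintype.card (Red N r A) = (A + 1) * N.descFactorial r := by
  rw [Fintype.card_prod, Fintype.card_fin, Fintype.card_pi]
  simp only [Fintype.card_fin]
  rw [Nat.descFactorial_eq_prod_range, Finset.prod_range]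

/-- The reduced monomial with exponents `c`. -/
noncomputable def mon (k : Type*) [CommSemiring k] {N r A : ℕ} (c : Red N r A) : MvPolynomial (Fin (r + 1)) k :=
  MvPolynomial.X 0 ^ (c.1 : ℕ) * ∏ j : Fin r, MvPolynomial.X j.succ ^ (c.2 j : ℕ)

section
variable {k : Type u} [Field k]

/-- If the relations between the `x i` are invariant under all permutations, then a relation
between distinct `x i` transfers to any other tuple of distinct `x i`. -/
lemma aeval_tup_eq_zero {R : Type*} [CommRing R] [Algebra k R] {N r : ℕ} {x : Fin (N + 1) → R}
    (hx : relMonoid (k := k) x = ⊤) {ι : Fin r ↪ Fin N} {φ : MvPolynomial (Fin (r + 1)) k}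
    (h : MvPolynomial.aeval (tup x ι) φ = 0) (ι' : Fin r ↪ Fin N) :
    MvPolynomial.aeval (tup x ι') φ = 0 := by
  let e : (Fin r ↪ Fin N) → (Fin (r + 1) ↪ Fin (N + 1)) := fun ι =>
    ⟨Fin.cons 0 (fun j => (ι j).succ), Fin.cons_injective_iff.mpr
      ⟨by rintro ⟨j, hj⟩; exact Fin.succ_ne_zero _ hj,
        (Fin.succ_injective N).comp ι.injective⟩⟩
  have he : ∀ ι, x ∘ e ι = tup x ι := by
    intro ι
    funext j
    refine Fin.cases ?_ (fun j => ?_) j <;> simp [e, tup]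
  obtain ⟨g, hg⟩ := (Equiv.Perm.isMultiplyPretransitive (Fin (N + 1)) (r + 1)).exists_smul_eq
    (e ι) (e ι')
  have hgm : g ∈ relMonoid (k := k) x := by rw [hx]; trivial
  have h1 := hgm (MvPolynomial.rename (e ι) φ)
    (by rw [MvPolynomial.aeval_rename, he]; exact h)
  rw [MvPolynomial.aeval_rename] at h1
  rw [← he, ← h1]
  congr 2
  funext j
  simp only [Function.comp_apply]
  rw [← hg]
  rfl

/-- The reduced monomials are linearly independent on tuples of distinct roots: by the symmetry of the
relations a linear dependence holds for all tuples of distinct roots starting with `x 0`, so that the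
Nullstellensatz for injective tuples applies. -/
lemma mon_independent {N r A : ℕ} {β : k} {x : Fin (N + 1) → PowerSeries k}
    (hx0 : x 0 = PowerSeries.C β + PowerSeries.X) (hinj : Function.Injective x)
    (hx : relMonoid (k := k) x = ⊤) (hr : r ≤ N) {ι : Fin r ↪ Fin N} (a : Red N r A → k)
    (h : MvPolynomial.aeval (tup x ι) (∑ c, MvPolynomial.C (a c) * mon k c) = 0) : a = 0 := by
  classical
  set s : Finset (PowerSeries k) := Finset.univ.image (x ∘ Fin.succ) with hs
  have hcard : s.card = N := by
    rw [hs, Finset.card_image_of_injective _ (hinj.comp (Fin.succ_injective N))]; simp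
  let P : (∀ j : Fin r, Fin (N - j)) → k[X] := fun c2 => ∑ c1 : Fin (A + 1), C (a (c1, c2)) * X ^ (c1 : ℕ)
  let ex : (∀ j : Fin r, Fin (N - j)) → (Fin r →₀ ℕ) := fun c2 =>
    Finsupp.equivFunOnFinite.symm (fun j => (c2 j : ℕ))
  let ψ : MvPolynomial (Fin r) (PowerSeries k) :=
    ∑ c2, MvPolynomial.monomial (ex c2) (aeval (x 0) (P c2))
  have hex : Function.Injective ex := by
    intro c c' hcc
    funext j
    apply Fin.ext
    exact DFunLike.congr_fun hcc j
  -- `ψ` is the dependence relation, with the powers of `x 0` regarded as coefficients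
  have hψ0 : ψ = 0 := by
    refine eq_zero_of_eval_injective s ψ (fun i => ?_) fun w hw hws => ?_
    · rw [hcard]
      have : MvPolynomial.degreeOf i ψ ≤ N - i - 1 := by
        refine (MvPolynomial.degreeOf_sum_le _ _ _).trans (Finset.sup_le fun c2 _ => ?_)
        refine (MvPolynomial.degreeOf_le_iff).mpr fun m hm => ?_
        have hm' := Finset.mem_singleton.mp (MvPolynomial.support_monomial_subset hm)
        rw [hm']
        have := (c2 i).isLt
        change (c2 i : ℕ) ≤ _
        omega
      have := i.isLt
      omega
    · have : ∀ j, ∃ i : Fin N, x i.succ = w j := by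
        intro j
        simpa [hs] using hws j
      choose f hf using this
      let ι' : Fin r ↪ Fin N := ⟨f, fun i j hij => hw (by rw [← hf, ← hf, hij])⟩
      have h1 := aeval_tup_eq_zero hx h ι'
      have hw' : tup x ι' = Fin.cons (x 0) w := by
        funext j
        refine Fin.cases ?_ (fun j => ?_) j
        · simp [tup]
        · exact hf j
      rw [hw', map_sum, Fintype.sum_prod_type_right] at h1
      rw [map_sum, ← h1]
      refine Finset.sum_congr rfl fun c2 _ => ?_
      rw [MvPolynomial.eval_monomial]
      simp only [P, map_sum, Finset.sum_mul]
      refine Finset.sum_congr rfl fun c1 _ => ?_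
      simp only [mon, map_mul, map_prod, map_pow, aeval_X, aeval_C, MvPolynomial.aeval_X,
        Fin.cons_zero, Fin.cons_succ, MvPolynomial.algHom_C]
      rw [Finsupp.prod_fintype _ _ (by simp)]
      simp only [ex, Finsupp.equivFunOnFinite_symm_apply_apply]
      ring
  funext c
  have h1 : MvPolynomial.coeff (ex c.2) ψ = aeval (x 0) (P c.2) := by
    simp only [ψ, MvPolynomial.coeff_sum, MvPolynomial.coeff_monomial]
    rw [Finset.sum_eq_single c.2]
    · simp
    · intro b _ hb
      rw [if_neg (fun e => hb (hex e))]
    · simp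
  rw [hψ0, MvPolynomial.coeff_zero] at h1
  have h2 : P c.2 = 0 := by
    by_contra hP
    apply aeval_shift_ne_zero β hP
    rw [← hx0, ← h1]
  have h3 := congrArg (fun p => p.coeff (c.1 : ℕ)) h2
  simp only [P, finsetSum_coeff, coeff_C_mul, coeff_X_pow, coeff_zero] at h3
  rw [Finset.sum_eq_single c.1] at h3
  · simpa using h3
  · intro b _ hb
    rw [if_neg (fun e => hb (Fin.ext e.symm)), mul_zero]
  · simp

end

/-! ### Nonvanishing of the auxiliary polynomial -/

section
variable {k : Type u} [Field k]

/-- The digits of the `X ^ q`-adic expansion of a combination of `q`-th powers, with coefficients in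
a space `V` of power series without nonzero elements of order at least `q`. -/
lemma frobenius_digit {p e : ℕ} [ExpChar k p] {ι : Type*} [Fintype ι]
    (V : Submodule k (PowerSeries k))
    (hV : ∀ v ∈ V, PowerSeries.X ^ (p ^ e) ∣ v → v = 0) (v : ι → PowerSeries k) (hv : ∀ j, v j ∈ V)
    (l : ℕ) (b : ι → PowerSeries k) (h : ∑ j, v j * b j ^ (p ^ e) = 0) :
    ∑ j, PowerSeries.coeff l (b j) ^ (p ^ e) • v j = 0 := by
  have : ExpChar (PowerSeries k) p :=
    expChar_of_injective_ringHom (PowerSeries.C_injective (R := k)) p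
  have step : ∀ b : ι → PowerSeries k, ∑ j, v j * b j ^ (p ^ e) = 0 →
      ∑ j, PowerSeries.coeff 0 (b j) ^ (p ^ e) • v j = 0 ∧
      ∑ j, v j * (PowerSeries.mk fun n => PowerSeries.coeff (n + 1) (b j)) ^ (p ^ e) = 0 := by
    intro b h
    set d : ι → PowerSeries k := fun j => PowerSeries.mk fun n => PowerSeries.coeff (n + 1) (b j)
      with hd
    have hb : ∀ j, b j ^ (p ^ e) = PowerSeries.X ^ (p ^ e) * d j ^ (p ^ e) +
        PowerSeries.C (PowerSeries.coeff 0 (b j) ^ (p ^ e)) := by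
      intro j
      rw [map_pow, ← mul_pow, ← add_pow_expChar_pow]
      congr 1
      rw [mul_comm, PowerSeries.coeff_zero_eq_constantCoeff_apply]
      exact PowerSeries.eq_shift_mul_X_add_const (b j)
    have h1 : ∑ j, v j * b j ^ (p ^ e) = PowerSeries.X ^ (p ^ e) * ∑ j, v j * d j ^ (p ^ e) +
        ∑ j, PowerSeries.coeff 0 (b j) ^ (p ^ e) • v j := by
      rw [Finset.mul_sum, ← Finset.sum_add_distrib]
      refine Finset.sum_congr rfl fun j _ => ?_
      rw [hb, PowerSeries.smul_eq_C_mul]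
      ring
    have h2 : ∑ j, PowerSeries.coeff 0 (b j) ^ (p ^ e) • v j = 0 := by
      refine hV _ (Submodule.sum_mem _ fun j _ => Submodule.smul_mem _ _ (hv j)) ?_
      rw [h] at h1
      exact ⟨-∑ j, v j * d j ^ (p ^ e), by linear_combination -h1⟩
    refine ⟨h2, ?_⟩
    rw [h, h2, add_zero, eq_comm, mul_eq_zero] at h1
    exact h1.resolve_left (pow_ne_zero _ PowerSeries.X_ne_zero)
  induction l generalizing b with
  | zero => exact (step b h).1
  | succ l ih =>
    have h4 := ih _ (step b h).2
    simpa only [PowerSeries.coeff_mk] using h4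

/-- The `q`-th powers of linearly independent power series are independent over a space `V` of
power series without nonzero elements of order at least `q`. -/
lemma frobenius_independent [IsAlgClosed k] {p e : ℕ} [ExpChar k p] {ι : Type*} [Fintype ι]
    (V : Submodule k (PowerSeries k))
    (hV : ∀ v ∈ V, PowerSeries.X ^ (p ^ e) ∣ v → v = 0) (v : ι → PowerSeries k) (hv : ∀ j, v j ∈ V)
    (b : ι → PowerSeries k) (hb : LinearIndependent k b)
    (h : ∑ j, v j * b j ^ (p ^ e) = 0) : v = 0 := by
  have hq0 : 0 < p ^ e := pow_pos (expChar_pos k p) _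
  rw [Fintype.linearIndependent_iff] at hb
  funext j
  ext m
  have hroot : ∀ j, ∃ t : k, t ^ (p ^ e) = PowerSeries.coeff m (v j) :=
    fun j => IsAlgClosed.exists_pow_nat_eq _ hq0
  choose t ht using hroot
  have h0 : ∑ j, t j • b j = 0 := by
    ext l
    have h1 := congrArg (PowerSeries.coeff m) (frobenius_digit V hV v hv l b h)
    simp only [map_sum, map_smul, smul_eq_mul, map_zero, ← ht, ← mul_pow] at h1 ⊢
    rw [← sum_pow_char_pow] at h1
    have h2 := pow_eq_zero_iff hq0.ne' |>.mp h1
    rw [← h2]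
    exact Finset.sum_congr rfl fun j _ => mul_comm _ _
  rw [← ht, hb t h0 j, zero_pow hq0.ne']
  simp

/-- A polynomial of degree less than `q` vanishing to order `q` at `β` is zero. -/
lemma eq_zero_of_X_pow_dvd_shift (β : k) {P : k[X]} {q : ℕ} (hP : P.natDegree < q)
    (h : PowerSeries.X ^ q ∣ aeval (PowerSeries.C β + PowerSeries.X : PowerSeries k) P) : P = 0 := by
  rw [aeval_shift, PowerSeries.X_pow_dvd_iff] at h
  have h1 : taylor β P = 0 := by
    ext m
    rcases lt_or_ge m q with hm | hm
    · simpa using h m hm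
    · rw [coeff_eq_zero_of_natDegree_lt, coeff_zero]
      rw [natDegree_taylor]; omega
  exact (taylor_eq_zero β P).mp h1

/-- The largest total degree, in the variables other than `X₀`, of the reduced monomials. -/
def sdeg (N r : ℕ) : ℕ := ∑ j : Fin r, (N - 1 - j)

lemma totalDegree_mon {N r A : ℕ} (c : Red N r A) : (mon k c).totalDegree ≤ A + sdeg N r := by
  refine (MvPolynomial.totalDegree_mul _ _).trans (add_le_add ?_ ?_)
  · rw [MvPolynomial.totalDegree_X_pow]
    omega
  · refine (MvPolynomial.totalDegree_finsetProd _ _).trans (Finset.sum_le_sum fun j _ => ?_)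
    rw [MvPolynomial.totalDegree_X_pow]
    have := (c.2 j).isLt
    omega

/-- Stepanov's auxiliary polynomial `∑ a c c' m_c m_{c'} ^ q`, with `m_c` the reduced monomials. -/
noncomputable def Phi (q : ℕ) {N r A B : ℕ} (a : Red N r A → Red N r B → k) : MvPolynomial (Fin (r + 1)) k :=
  ∑ c', (∑ c, MvPolynomial.C (a c c') * mon k c) * mon k c' ^ q

lemma totalDegree_Phi (q : ℕ) {N r A B : ℕ} (a : Red N r A → Red N r B → k) :
    (Phi q a).totalDegree ≤ A + sdeg N r + q * (B + sdeg N r) := by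
  refine MvPolynomial.totalDegree_finsetSum_le fun c' _ => ?_
  refine (MvPolynomial.totalDegree_mul _ _).trans (add_le_add ?_ ?_)
  · refine MvPolynomial.totalDegree_finsetSum_le fun c _ => ?_
    refine (MvPolynomial.totalDegree_mul _ _).trans ?_
    rw [MvPolynomial.totalDegree_C, zero_add]
    exact totalDegree_mon c
  · refine (MvPolynomial.totalDegree_pow _ _).trans ?_
    gcongr
    exact totalDegree_mon _

/-- The auxiliary polynomial does not vanish identically on the curve: its norm is nonzero. -/
lemma norm_Phi_ne_zero [IsAlgClosed k] {M : k[X]} {N : ℕ} (h : Morse M N) (hN : 1 ≤ N)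
    {p e : ℕ} [ExpChar k p] {r A B : ℕ} (hr : r ≤ N)
    (hA : N.descFactorial r * (A + sdeg N r) < p ^ e)
    (a : Red N r A → Red N r B → k) (ha : a ≠ 0) {P : k[X]}
    (hP : ∀ (R : Type u) [CommRing R] [IsDomain R] [Algebra k R] (x : Fin (N + 1) → R),
      RootSys M x → aeval (x 0) P = ∏ ι : Fin r ↪ Fin N, MvPolynomial.aeval (tup x ι) (Phi (p ^ e) a)) :
    P ≠ 0 := by
  obtain ⟨β, x, hx0, hx, κ, b, hb, hκ⟩ := exists_finite h hN
  have hrel := relMonoid_eq_top h hN hx0 hx hb hκ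
  intro hP0
  have h1 := hP _ x hx
  rw [hP0, map_zero, eq_comm, Finset.prod_eq_zero_iff] at h1
  obtain ⟨ι, -, hι⟩ := h1
  let L : (Red N r A → k) → MvPolynomial (Fin (r + 1)) k := fun u => ∑ c, MvPolynomial.C (u c) * mon k c
  let Lm : (Red N r A → k) →ₗ[k] PowerSeries k :=
    Fintype.linearCombination k (fun c => MvPolynomial.aeval (tup x ι) (mon k c))
  have hLm : ∀ u, Lm u = MvPolynomial.aeval (tup x ι) (L u) := by
    intro u
    simp only [Lm, L, Fintype.linearCombination_apply, map_sum, map_mul, MvPolynomial.algHom_C,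
      Algebra.smul_def]
  -- a combination of small reduced monomials vanishing to order `q` is zero: its norm has degree
  -- less than `q`
  have hV : ∀ v ∈ LinearMap.range Lm, PowerSeries.X ^ (p ^ e) ∣ v → v = 0 := by
    rintro _ ⟨u, rfl⟩ hdvd
    by_contra hne
    obtain ⟨Q, hQ⟩ := exists_norm M h.monic h.deg (L u)
    have hd : Q.natDegree < p ^ e := by
      refine lt_of_le_of_lt (natDegree_norm_le h.monic h.deg h.char (D := A + sdeg N r) ?_ hQ) hA
      refine MvPolynomial.totalDegree_finsetSum_le fun c _ => ?_
      refine (MvPolynomial.totalDegree_mul _ _).trans ?_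
      rw [MvPolynomial.totalDegree_C, zero_add]
      exact totalDegree_mon c
    have h2 := hQ _ x hx
    have hQ0 : Q = 0 := by
      apply eq_zero_of_X_pow_dvd_shift β hd
      rw [← hx0, h2]
      rw [hLm] at hdvd
      exact hdvd.trans (Finset.dvd_prod_of_mem _ (Finset.mem_univ ι))
    rw [hQ0, map_zero, eq_comm, Finset.prod_eq_zero_iff] at h2
    obtain ⟨ι', -, hι'⟩ := h2
    apply hne
    rw [hLm]
    exact aeval_tup_eq_zero hrel hι' ι
  have hlin : LinearIndependent k (fun c' : Red N r B => MvPolynomial.aeval (tup x ι) (mon k c')) := by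
    rw [Fintype.linearIndependent_iff]
    intro g hg c
    have := mon_independent hx0 hx.inj hrel hr (ι := ι) g (by
      rw [← hg]
      simp only [map_sum, map_mul, MvPolynomial.algHom_C, Algebra.smul_def])
    rw [this]; rfl
  have hz := frobenius_independent (LinearMap.range Lm) hV (fun c' => Lm (fun c => a c c'))
    (fun c' => ⟨_, rfl⟩) _ hlin (by
      rw [← hι, Phi, map_sum]
      refine Finset.sum_congr rfl fun c' _ => ?_
      rw [hLm, map_mul, map_pow])
  apply ha
  funext c c'
  have h3 := congrFun hz c'
  rw [hLm] at h3
  exact congrFun (mon_independent hx0 hx.inj hrel hr (ι := ι) _ h3) c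

end

/-! ### Successive quotients -/

section
variable {k : Type u} [Field k]

/-- The successive quotients of `M` by `Y - y 0`, `Y - y 1`, …. -/
noncomputable def G (M : k[X]) {A : Type*} [CommRing A] [Algebra k A] (y : ℕ → A) : ℕ → A[X]
  | 0 => M.map (algebraMap k A)
  | i + 1 => G M y i /ₘ (X - C (y i))

lemma G_map (M : k[X]) {A B : Type*} [CommRing A] [Algebra k A] [CommRing B] [Algebra k B]
    (f : A →ₐ[k] B) (y : ℕ → A) (i : ℕ) :
    (G M y i).map (f : A →+* B) = G M (fun i => f (y i)) i := by
  induction i with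
  | zero => simp [G, Polynomial.map_map]
  | succ i ih =>
    rw [G, Polynomial.map_divByMonic _ (monic_X_sub_C _), ih, G]
    simp

lemma G_monic {M : k[X]} {N : ℕ} (hM : M.Monic) (hN : M.natDegree = N + 1) {A : Type*} [CommRing A]
    [Nontrivial A] [Algebra k A] (y : ℕ → A) (i : ℕ) (hi : i ≤ N + 1) :
    (G M y i).Monic ∧ (G M y i).natDegree = N + 1 - i := by
  induction i with
  | zero => exact ⟨hM.map _, by rw [G, hM.natDegree_map, hN]; rfl⟩
  | succ i ih =>
    obtain ⟨h1, h2⟩ := ih (by omega)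
    constructor
    · have h3 : degree (X - C (y i)) ≤ degree (G M y i) := by
        rw [degree_X_sub_C, degree_eq_natDegree h1.ne_zero, h2]
        exact_mod_cast (by omega : 1 ≤ N + 1 - i)
      rw [G, Monic, leadingCoeff_divByMonic_of_monic (monic_X_sub_C _) h3, h1.leadingCoeff]
    · rw [G, natDegree_divByMonic _ (monic_X_sub_C _), h2, natDegree_X_sub_C]
      omega

/-- `M(Y) - M(y 0)` is the product of the factors `Y - y j`, `j ≤ i`, and the quotient of
index `i + 1`. -/
lemma G_prod (M : k[X]) {A : Type*} [CommRing A] [IsDomain A] [Algebra k A] (y : ℕ → A) (i : ℕ)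
    (hinj : Set.InjOn y (Set.Iic i)) (heq : ∀ j ≤ i, aeval (y j) M = aeval (y 0) M) :
    (∏ j ∈ Finset.range (i + 1), (X - C (y j))) * G M y (i + 1) =
      M.map (algebraMap k A) - C (aeval (y 0) M) := by
  induction i with
  | zero =>
    simp only [zero_add, Finset.range_one, Finset.prod_singleton, G]
    have h := modByMonic_add_div (M.map (algebraMap k A)) (X - C (y 0))
    rw [modByMonic_X_sub_C_eq_C_eval, eval_map_algebraMap] at h
    linear_combination h
  | succ i ih =>
    have h1 := ih (hinj.mono (Set.Iic_subset_Iic.mpr (Nat.le_succ i))) (fun j hj => heq j (by omega))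
    have h2 : (G M y (i + 1)).IsRoot (y (i + 1)) := by
      have h3 := congrArg (fun p => p.eval (y (i + 1))) h1
      simp only [eval_mul, eval_prod, eval_sub, eval_X, eval_C, eval_map_algebraMap,
        heq (i + 1) le_rfl, sub_self] at h3
      refine (mul_eq_zero.mp h3).resolve_left ?_
      rw [← ne_eq, Finset.prod_ne_zero_iff]
      intro j hj
      rw [Finset.mem_range] at hj
      rw [sub_ne_zero]
      intro e
      have := hinj (Set.mem_Iic.mpr le_rfl) (Set.mem_Iic.mpr (by omega : j ≤ i + 1)) e
      omega
    rw [Finset.prod_range_succ, mul_assoc]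
    conv_lhs => rw [show i + 1 + 1 = (i + 1) + 1 from rfl]; rw [G]
    rw [mul_divByMonic_eq_iff_isRoot.mpr h2, h1]

/-- Extension of a finite tuple by zero. -/
def ext {r : ℕ} {A : Type*} [Zero A] (y : Fin (r + 1) → A) (i : ℕ) : A :=
  if h : i < r + 1 then y ⟨i, h⟩ else 0

lemma ext_apply {r : ℕ} {A : Type*} [Zero A] (y : Fin (r + 1) → A) (i : Fin (r + 1)) :
    ext y i = y i := dif_pos i.isLt

lemma map_ext {r : ℕ} {A B : Type*} [CommRing A] [Algebra k A] [CommRing B] [Algebra k B]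
    (f : A →ₐ[k] B) (y : Fin (r + 1) → A) : (fun i => f (ext y i)) = ext (fun i => f (y i)) := by
  funext i
  simp only [ext]
  split_ifs <;> simp

lemma RootSys.G_prod {M : k[X]} {r : ℕ} {A : Type*} [CommRing A] [IsDomain A] [Algebra k A]
    {y : Fin (r + 1) → A} (hy : RootSys M y) (i : Fin (r + 1)) :
    (∏ j ∈ Finset.range (i + 1), (X - C (ext y j))) * G M (ext y) (i + 1) =
      M.map (algebraMap k A) - C (aeval (y 0) M) := by
  have h0 : ext y 0 = y 0 := ext_apply y 0
  rw [← h0]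
  apply MorseIrr.G_prod
  · intro a ha b hb hab
    rw [Set.mem_Iic] at ha hb
    have h1 := ext_apply y ⟨a, by omega⟩
    have h2 := ext_apply y ⟨b, by omega⟩
    simp only at h1 h2
    rw [h1, h2] at hab
    simpa using hy.inj hab
  · intro j hj
    have h1 := ext_apply y ⟨j, by omega⟩
    simp only at h1
    rw [h1, h0, hy.eq]

lemma RootSys.G_root {M : k[X]} {r : ℕ} {A : Type*} [CommRing A] [IsDomain A] [Algebra k A]
    {y : Fin (r + 1) → A} (hy : RootSys M y) (i : Fin r) :
    (G M (ext y) (i + 1)).eval (y i.succ) = 0 := by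
  have h1 := congrArg (fun p => p.eval (y i.succ)) (hy.G_prod i.castSucc)
  simp only [eval_mul, eval_prod, eval_sub, eval_X, eval_C, eval_map_algebraMap,
    hy.eq i.succ, sub_self, Fin.val_castSucc] at h1
  refine (mul_eq_zero.mp h1).resolve_left ?_
  rw [← ne_eq, Finset.prod_ne_zero_iff]
  intro j hj
  rw [Finset.mem_range] at hj
  have h2 := ext_apply y ⟨j, by omega⟩
  simp only at h2
  rw [h2, sub_ne_zero]
  intro e
  have := congrArg Fin.val (hy.inj e)
  simp at this
  omega

/-- Degrees and variables of the coefficients of the universal quotients. -/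
lemma G_coeff {M : k[X]} {N r : ℕ} (hM : M.Monic) (hN : M.natDegree = N + 1) (i : ℕ)
    (hi : i ≤ N + 1) (l : ℕ) :
    ((G M (ext (MvPolynomial.X : Fin (r + 1) → MvPolynomial (Fin (r + 1)) k)) i).coeff l).totalDegree
        ≤ N + 1 - i - l ∧
    (G M (ext (MvPolynomial.X : Fin (r + 1) → MvPolynomial (Fin (r + 1)) k)) i).coeff l ∈
        MvPolynomial.supported k {j : Fin (r + 1) | (j : ℕ) < i} := by
  induction i generalizing l with
  | zero =>
    rw [G, coeff_map]
    refine ⟨?_, Subalgebra.algebraMap_mem _ _⟩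
    rw [MvPolynomial.algebraMap_eq, MvPolynomial.totalDegree_C]
    exact Nat.zero_le _
  | succ i ih =>
    have ih := ih (by omega)
    have hd := (G_monic hM hN (ext (MvPolynomial.X : Fin (r + 1) → MvPolynomial (Fin (r + 1)) k))
      i (by omega)).2
    rw [G, coeff_divByMonic_X_sub_C, hd]
    constructor
    · refine MvPolynomial.totalDegree_finsetSum_le fun t ht => ?_
      rw [Finset.mem_Icc] at ht
      have h1 : (ext (MvPolynomial.X : Fin (r + 1) → MvPolynomial (Fin (r + 1)) k) i).totalDegree ≤ 1 := by
        rw [ext]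
        split_ifs
        · exact (MvPolynomial.totalDegree_X _).le
        · simp
      have h2 := MvPolynomial.totalDegree_mul
        (ext (MvPolynomial.X : Fin (r + 1) → MvPolynomial (Fin (r + 1)) k) i ^ (t - (l + 1)))
        ((G M (ext (MvPolynomial.X : Fin (r + 1) → MvPolynomial (Fin (r + 1)) k)) i).coeff t)
      have h3 := MvPolynomial.totalDegree_pow
        (ext (MvPolynomial.X : Fin (r + 1) → MvPolynomial (Fin (r + 1)) k) i) (t - (l + 1))
      have h4 := (ih t).1
      have h5 := Nat.mul_le_mul_left (t - (l + 1)) h1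
      omega
    · refine Subalgebra.sum_mem _ fun t _ => Subalgebra.mul_mem _ (Subalgebra.pow_mem _ ?_ _) ?_
      · rw [ext]
        split_ifs
        · exact MvPolynomial.X_mem_supported.mpr (by simp)
        · exact Subalgebra.zero_mem _
      · exact MvPolynomial.supported_mono (fun j hj => Nat.lt_succ_of_lt hj) (ih t).2

end

/-! ### Reduction to reduced monomials -/

section
variable {k : Type u} [Field k]

/-- The polynomials which agree, at all points with distinct coordinates in the same fibre of `M`,
with a combination of reduced monomials of degree at most `E` in `X₀`. -/
def redSub (M : k[X]) (N r E : ℕ) : Submodule k (MvPolynomial (Fin (r + 1)) k) where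
  carrier := {φ | ∃ u : Red N r E → k, ∀ y : Fin (r + 1) → k, RootSys M y →
    MvPolynomial.eval y φ = ∑ c, u c * MvPolynomial.eval y (mon k c)}
  zero_mem' := ⟨0, fun y _ => by simp⟩
  add_mem' := by
    rintro φ ψ ⟨u, hu⟩ ⟨v, hv⟩
    refine ⟨u + v, fun y hy => ?_⟩
    rw [map_add, hu y hy, hv y hy, ← Finset.sum_add_distrib]
    exact Finset.sum_congr rfl fun c _ => by rw [Pi.add_apply, add_mul]
  smul_mem' := by
    rintro a φ ⟨u, hu⟩
    refine ⟨a • u, fun y hy => ?_⟩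
    rw [MvPolynomial.smul_eval, hu y hy, Finset.mul_sum]
    exact Finset.sum_congr rfl fun c _ => by rw [Pi.smul_apply, smul_eq_mul, mul_assoc]

lemma redSub_congr {M : k[X]} {N r E : ℕ} {φ ψ : MvPolynomial (Fin (r + 1)) k}
    (h : ∀ y : Fin (r + 1) → k, RootSys M y → MvPolynomial.eval y φ = MvPolynomial.eval y ψ)
    (hφ : φ ∈ redSub M N r E) : ψ ∈ redSub M N r E := by
  obtain ⟨u, hu⟩ := hφ
  exact ⟨u, fun y hy => by rw [← h y hy, hu y hy]⟩

lemma mon_mem_redSub (M : k[X]) {N r E : ℕ} (c : Red N r E) : mon k c ∈ redSub M N r E := by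
  classical
  refine ⟨Pi.single c 1, fun y _ => ?_⟩
  rw [Finset.sum_eq_single c]
  · simp
  · intro b _ hb
    rw [Pi.single_eq_of_ne hb, zero_mul]
  · simp

/-- Reduction of monomials, by induction on the index `t` up to which the exponents are not yet
reduced: the monic equation `G M X (t + 1)` satisfied by the variable of index `t + 1` lowers its
exponent without raising the total degree, and involves no variable of larger index. -/
lemma monomial_mem_redSub {M : k[X]} {N r : ℕ} (hM : M.Monic) (hN : M.natDegree = N + 1)
    (hr : r ≤ N) (E : ℕ) (t : ℕ) (ht : t ≤ r) (a : Fin (r + 1) →₀ ℕ) (ha : a.degree ≤ E)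
    (hat : ∀ j : Fin (r + 1), t < (j : ℕ) → a j < N + 1 - j) :
    MvPolynomial.monomial a (1 : k) ∈ redSub M N r E := by
  classical
  induction t generalizing a with
  | zero =>
    have h0 : a 0 < E + 1 := Nat.lt_succ_of_le ((Finsupp.le_degree 0 a).trans ha)
    have h1 : ∀ j : Fin r, a j.succ < N - j := by
      intro j
      have := hat j.succ (by simp)
      rw [Fin.val_succ] at this
      omega
    convert mon_mem_redSub M (N := N) (r := r) (E := E) (⟨a 0, h0⟩, fun j => ⟨a j.succ, h1 j⟩)
    rw [mon, MvPolynomial.monomial_eq, Finsupp.prod_fintype _ _ (by simp), Fin.prod_univ_succ]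
    simp
  | succ t ih =>
    set i : Fin (r + 1) := ⟨t + 1, by omega⟩ with hi
    generalize hs : a i = s
    induction s using Nat.strong_induction_on generalizing a with
    | _ s ihs =>
    rcases lt_or_ge (a i) (N - t) with hlt | hge
    · refine ih (by omega) a ha fun j hj => ?_
      rcases Nat.lt_or_ge (t + 1) j with h1 | h1
      · exact hat j h1
      · have h2 : j = i := Fin.ext (by simp [hi]; omega)
        rw [h2]
        have : ((i : Fin (r + 1)) : ℕ) = t + 1 := rfl
        omega
    · set D := N - t with hD
      set y : ℕ → MvPolynomial (Fin (r + 1)) k := ext MvPolynomial.X with hy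
      obtain ⟨hm, hd⟩ := G_monic hM hN y (t + 1) (by omega)
      have hd' : (G M y (t + 1)).natDegree = D := by rw [hd]; omega
      set a' : Fin (r + 1) →₀ ℕ := a - Finsupp.single i D with ha'
      have haa : a' + Finsupp.single i D = a := by
        rw [ha']
        exact tsub_add_cancel_of_le (Finsupp.single_le_iff.mpr hge)
      have hdeg : a'.degree + D = a.degree := by
        rw [← haa, map_add, Finsupp.degree_single]
      have hai : a' i + D = a i := by
        conv_rhs => rw [← haa]
        simp
      have haj : ∀ j, j ≠ i → a' j = a j := by
        intro j hj
        conv_rhs => rw [← haa]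
        simp [Finsupp.single_eq_of_ne hj]
      have hmem : -∑ l ∈ Finset.range D, MvPolynomial.monomial a' (1 : k) *
          ((G M y (t + 1)).coeff l * MvPolynomial.X i ^ l) ∈ redSub M N r E := by
        refine Submodule.neg_mem _ (Submodule.sum_mem _ fun l hl => ?_)
        rw [Finset.mem_range] at hl
        obtain ⟨hc1, hc2⟩ := G_coeff (r := r) hM hN (t + 1) (by omega) l
        rw [← hy] at hc1 hc2
        set g := (G M y (t + 1)).coeff l with hg
        have hsum : MvPolynomial.monomial a' (1 : k) * (g * MvPolynomial.X i ^ l) =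
            ∑ b ∈ g.support, g.coeff b •
              MvPolynomial.monomial (a' + (b + Finsupp.single i l)) (1 : k) := by
          conv_lhs => rw [g.as_sum]
          rw [Finset.sum_mul, Finset.mul_sum]
          refine Finset.sum_congr rfl fun b _ => ?_
          rw [MvPolynomial.X_pow_eq_monomial, MvPolynomial.monomial_mul, MvPolynomial.monomial_mul,
            MvPolynomial.smul_monomial]
          simp
        rw [hsum]
        refine Submodule.sum_mem _ fun b hb => Submodule.smul_mem _ _ ?_
        have hb1 : b.degree ≤ D - l := by
          have := MvPolynomial.le_totalDegree hb
          rw [Finsupp.degree_eq_sum]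
          rw [Finsupp.sum_fintype _ _ (by simp)] at this
          omega
        have hb2 : ∀ j : Fin (r + 1), t + 1 ≤ (j : ℕ) → b j = 0 := by
          intro j hj
          by_contra hne
          have h1 : j ∈ g.vars := (MvPolynomial.mem_vars_iff_mem_support j).mpr ⟨b, hb, Finsupp.mem_support_iff.mpr hne⟩
          have h2 := MvPolynomial.mem_supported.mp hc2 h1
          simp only [Set.mem_ofPred_eq] at h2
          omega
        refine ihs (a' i + l) (by omega) _ ?_ ?_ rfl ?_
        · rw [map_add, map_add, Finsupp.degree_single]
          omega
        · intro j hj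
          have hji : j ≠ i := by
            intro e
            rw [e] at hj
            exact absurd hj (lt_irrefl _)
          have h3 := hat j hj
          simp only [Finsupp.add_apply, Finsupp.single_eq_of_ne hji, hb2 j hj.le, haj j hji, add_zero]
          exact h3
        · rw [← hi, Finsupp.add_apply, Finsupp.add_apply, hb2 i le_rfl, Finsupp.single_eq_same, zero_add]
      refine redSub_congr (fun z hz => ?_) hmem
      have hroot := hz.G_root ⟨t, by omega⟩
      have hmap := G_map M (MvPolynomial.aeval z : MvPolynomial (Fin (r + 1)) k →ₐ[k] k) y (t + 1)
      rw [hy, map_ext] at hmap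
      simp only [MvPolynomial.aeval_X] at hmap
      rw [← hy] at hmap
      have hroot' : eval (z i) (G M (ext z) (t + 1)) = 0 := hroot
      rw [← hmap, hm.as_sum, hd'] at hroot'
      simp only [Polynomial.map_add, Polynomial.map_pow, map_X, Polynomial.map_sum,
        Polynomial.map_mul, map_C, eval_add, eval_pow, eval_X, eval_finsetSum, eval_mul, eval_C] at hroot'
      rw [← haa, map_neg, map_sum]
      have h5 : MvPolynomial.eval z (MvPolynomial.monomial (a' + Finsupp.single i D) (1 : k)) =
          MvPolynomial.eval z (MvPolynomial.monomial a' (1 : k)) * z i ^ D := by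
        rw [MvPolynomial.monomial_add_single, map_mul, map_pow, MvPolynomial.eval_X]
      rw [h5]
      simp only [map_mul, map_pow, MvPolynomial.eval_X, ← Finset.mul_sum]
      have h6 : ∀ g : MvPolynomial (Fin (r + 1)) k,
          (MvPolynomial.aeval z : MvPolynomial (Fin (r + 1)) k →ₐ[k] k) g = MvPolynomial.eval z g :=
        fun g => by rw [MvPolynomial.aeval_eq_eval]
      simp only [RingHom.coe_coe, h6] at hroot'
      linear_combination -(MvPolynomial.eval z (MvPolynomial.monomial a' (1 : k))) * hroot'

/-- A polynomial of degree at most `E` agrees on the points with distinct coordinates in the same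
fibre of `M` with a combination of reduced monomials of degree at most `E` in `X₀`. -/
lemma mem_redSub {M : k[X]} {N r : ℕ} (hM : M.Monic) (hN : M.natDegree = N + 1)
    (hr : r ≤ N) {E : ℕ} {φ : MvPolynomial (Fin (r + 1)) k} (hφ : φ.totalDegree ≤ E) :
    φ ∈ redSub M N r E := by
  rw [φ.as_sum]
  refine Submodule.sum_mem _ fun b hb => ?_
  have h1 : MvPolynomial.monomial b (φ.coeff b) = φ.coeff b • MvPolynomial.monomial b (1 : k) := by
    rw [MvPolynomial.smul_monomial, smul_eq_mul, mul_one]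
  rw [h1]
  refine Submodule.smul_mem _ _ (monomial_mem_redSub hM hN hr E r le_rfl b ?_ fun j hj => ?_)
  · have := MvPolynomial.le_totalDegree hb
    rw [Finsupp.degree_eq_sum]
    rw [Finsupp.sum_fintype _ _ (by simp)] at this
    omega
  · have := j.isLt
    omega

end

/-! ### Universal local solutions -/

section
variable {k : Type u} [Field k]

/-- The Taylor coefficients of `M` at `x`. -/
noncomputable def tc (M : k[X]) {A : Type*} [CommRing A] [Algebra k A] (x : A) (j : ℕ) : A :=
  (taylor x (M.map (algebraMap k A))).coeff j

lemma tc_map (M : k[X]) {A B : Type*} [CommRing A] [Algebra k A] [CommRing B] [Algebra k B]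
    (f : A →ₐ[k] B) (x : A) (j : ℕ) : f (tc M x j) = tc M (f x) j := by
  have h := map_taylor (M.map (algebraMap k A)) x (f : A →+* B)
  rw [Polynomial.map_map, AlgHom.comp_algebraMap] at h
  rw [tc, tc]
  have h1 := congrArg (fun p => p.coeff j) h
  simp only [coeff_map] at h1
  exact h1

lemma tc_zero (M : k[X]) {A : Type*} [CommRing A] [Algebra k A] (x : A) :
    tc M x 0 = aeval x M := by
  rw [tc, taylor_coeff_zero, eval_map_algebraMap]

lemma tc_one (M : k[X]) {A : Type*} [CommRing A] [Algebra k A] (x : A) :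
    tc M x 1 = aeval x (derivative M) := by
  rw [tc, taylor_coeff_one, derivative_map, eval_map_algebraMap]

lemma aeval_add_eq (M : k[X]) {N : ℕ} (hN : M.natDegree = N + 1) {A : Type*} [CommRing A]
    [Algebra k A] (x : A) (h : A[X]) :
    aeval (C x + h) M = C (tc M x 0) + C (tc M x 1) * h +
      ∑ j ∈ Finset.range N, C (tc M x (j + 2)) * h ^ (j + 2) := by
  have h1 : aeval (C x + h) M = ((taylor x (M.map (algebraMap k A))).map C).eval h := by
    rw [map_taylor, taylor_eval, Polynomial.map_map, add_comm]
    rw [← eval_map_algebraMap]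
    rfl
  have h2 : ((taylor x (M.map (algebraMap k A))).map C).natDegree < N + 2 := by
    refine lt_of_le_of_lt natDegree_map_le ?_
    rw [natDegree_taylor]
    exact lt_of_le_of_lt natDegree_map_le (by omega)
  rw [h1, eval_eq_sum_range' h2, Finset.sum_range_succ', Finset.sum_range_succ']
  simp only [coeff_map, tc, zero_add, pow_one, pow_zero, mul_one, add_assoc, Nat.reduceAdd]
  ring

/-- Approximations, by Picard iteration, of the power series `ζ(e)` with
`M (x + M'(x) c e ζ) = M x + M'(x)² c e`. -/
noncomputable def zeta (M : k[X]) (N : ℕ) {A : Type*} [CommRing A] [Algebra k A] (x c : A) : ℕ → A[X]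
  | 0 => 1
  | t + 1 => 1 - ∑ j ∈ Finset.range N,
      C (tc M x (j + 2) * tc M x 1 ^ j * c ^ (j + 1)) * X ^ (j + 1) * zeta M N x c t ^ (j + 2)

lemma zeta_map (M : k[X]) (N : ℕ) {A B : Type*} [CommRing A] [Algebra k A] [CommRing B] [Algebra k B]
    (f : A →ₐ[k] B) (x c : A) (t : ℕ) :
    (zeta M N x c t).map (f : A →+* B) = zeta M N (f x) (f c) t := by
  induction t with
  | zero => simp [zeta]
  | succ t ih =>
    simp only [zeta, Polynomial.map_sub, Polynomial.map_one, Polynomial.map_sum, Polynomial.map_mul,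
      Polynomial.map_pow, map_C, map_X, ih, RingHom.coe_coe, map_mul, map_pow, tc_map]

lemma X_pow_dvd_zeta_sub (M : k[X]) (N : ℕ) {A : Type*} [CommRing A] [Algebra k A] (x c : A) (t : ℕ) :
    X ^ (t + 1) ∣ zeta M N x c (t + 1) - zeta M N x c t := by
  induction t with
  | zero =>
    have : zeta M N x c (0 + 1) - zeta M N x c 0 = -∑ j ∈ Finset.range N,
      C (tc M x (j + 2) * tc M x 1 ^ j * c ^ (j + 1)) * X ^ (j + 1) * zeta M N x c 0 ^ (j + 2) := by
      simp only [zeta]; ring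
    rw [this, dvd_neg]
    refine Finset.dvd_sum fun j _ => ?_
    exact Dvd.dvd.mul_right (Dvd.dvd.mul_left (pow_dvd_pow _ (by omega)) _) _
  | succ t ih =>
    have : zeta M N x c (t + 1 + 1) - zeta M N x c (t + 1) = -∑ j ∈ Finset.range N,
      C (tc M x (j + 2) * tc M x 1 ^ j * c ^ (j + 1)) * (X ^ j * (X *
        (zeta M N x c (t + 1) ^ (j + 2) - zeta M N x c t ^ (j + 2)))) := by
      conv_lhs => rw [zeta]
      conv_lhs => enter [2]; rw [zeta]
      rw [sub_sub_sub_cancel_left, ← Finset.sum_sub_distrib, ← Finset.sum_neg_distrib]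
      exact Finset.sum_congr rfl fun j _ => by ring
    rw [this, dvd_neg]
    refine Finset.dvd_sum fun j _ => ?_
    refine Dvd.dvd.mul_left (Dvd.dvd.mul_left ?_ _) _
    rw [pow_succ' X (t + 1)]
    exact mul_dvd_mul_left _ (ih.trans (sub_dvd_pow_sub_pow _ _ _))

lemma zeta_spec (M : k[X]) {N : ℕ} (hN : M.natDegree = N + 1) {A : Type*} [CommRing A] [Algebra k A]
    (x c : A) (t : ℕ) :
    X ^ (t + 2) ∣ aeval (C x + C (tc M x 1 * c) * X * zeta M N x c t) M -
      (C (aeval x M) + C (tc M x 1 ^ 2 * c) * X) := by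
  rw [aeval_add_eq M hN, ← tc_zero]
  have h1 : C (tc M x 0) + C (tc M x 1) * (C (tc M x 1 * c) * X * zeta M N x c t) +
      ∑ j ∈ Finset.range N, C (tc M x (j + 2)) * (C (tc M x 1 * c) * X * zeta M N x c t) ^ (j + 2) -
      (C (tc M x 0) + C (tc M x 1 ^ 2 * c) * X) =
      C (tc M x 1 ^ 2 * c) * (X * (zeta M N x c t - zeta M N x c (t + 1))) := by
    have h2 : ∑ j ∈ Finset.range N, C (tc M x (j + 2)) * (C (tc M x 1 * c) * X * zeta M N x c t) ^ (j + 2) =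
      C (tc M x 1 ^ 2 * c) * X * ∑ j ∈ Finset.range N,
      C (tc M x (j + 2) * tc M x 1 ^ j * c ^ (j + 1)) * X ^ (j + 1) * zeta M N x c t ^ (j + 2) := by
      rw [Finset.mul_sum]
      refine Finset.sum_congr rfl fun j _ => ?_
      simp only [map_mul, map_pow]
      ring
    rw [h2]
    conv_rhs => rw [zeta]
    simp only [map_mul, map_pow]
    ring
  rw [h1, pow_succ' X (t + 1)]
  refine Dvd.dvd.mul_left (mul_dvd_mul_left _ ?_) _
  rw [← dvd_neg, neg_sub]
  exact X_pow_dvd_zeta_sub M N x c t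

/-- The coefficient of `X ^ l` has degree at most `d + l w`. -/
def Fil {σ : Type*} (w d : ℕ) (p : (MvPolynomial σ k)[X]) : Prop :=
  ∀ l, (p.coeff l).totalDegree ≤ d + l * w

lemma Fil.mul {σ : Type*} {w d d' : ℕ} {p p' : (MvPolynomial σ k)[X]} (h : Fil w d p)
    (h' : Fil w d' p') : Fil w (d + d') (p * p') := by
  intro l
  rw [coeff_mul]
  refine MvPolynomial.totalDegree_finsetSum_le fun x hx => ?_
  refine (MvPolynomial.totalDegree_mul _ _).trans ((add_le_add (h _) (h' _)).trans ?_)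
  rw [Finset.HasAntidiagonal.mem_antidiagonal] at hx
  rw [← hx]
  nlinarith

lemma Fil.sum {σ ι : Type*} {w d : ℕ} {s : Finset ι} {p : ι → (MvPolynomial σ k)[X]}
    (h : ∀ i ∈ s, Fil w d (p i)) : Fil w d (∑ i ∈ s, p i) := by
  intro l
  rw [finsetSum_coeff]
  exact MvPolynomial.totalDegree_finsetSum_le fun i hi => h i hi l

lemma Fil.add {σ : Type*} {w d : ℕ} {p p' : (MvPolynomial σ k)[X]} (h : Fil w d p)
    (h' : Fil w d p') : Fil w d (p + p') := by
  intro l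
  rw [coeff_add]
  exact (MvPolynomial.totalDegree_add _ _).trans (max_le (h l) (h' l))

lemma Fil.sub {σ : Type*} {w d : ℕ} {p p' : (MvPolynomial σ k)[X]} (h : Fil w d p)
    (h' : Fil w d p') : Fil w d (p - p') := by
  intro l
  rw [coeff_sub]
  exact (MvPolynomial.totalDegree_sub _ _).trans (max_le (h l) (h' l))

lemma Fil.one {σ : Type*} {w : ℕ} : Fil w 0 (1 : (MvPolynomial σ k)[X]) := by
  intro l
  rw [coeff_one]
  split_ifs <;> simp

lemma Fil.pow {σ : Type*} {w d : ℕ} {p : (MvPolynomial σ k)[X]} (h : Fil w d p) (j : ℕ) :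
    Fil w (j * d) (p ^ j) := by
  induction j with
  | zero => simpa using Fil.one
  | succ j ih =>
    rw [pow_succ, Nat.succ_mul]
    exact ih.mul h

lemma Fil.prod {σ ι : Type*} {w : ℕ} {s : Finset ι} {d : ι → ℕ} {p : ι → (MvPolynomial σ k)[X]}
    (h : ∀ i ∈ s, Fil w (d i) (p i)) : Fil w (∑ i ∈ s, d i) (∏ i ∈ s, p i) := by
  classical
  induction s using Finset.induction_on with
  | empty => simpa using Fil.one
  | insert a s ha ih =>
    rw [Finset.prod_insert ha, Finset.sum_insert ha]
    exact (h a (Finset.mem_insert_self a s)).mul (ih fun i hi => h i (Finset.mem_insert_of_mem hi))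

lemma Fil.C_mul_X_pow {σ : Type*} {w d j : ℕ} {a : MvPolynomial σ k} (h : a.totalDegree ≤ d + j * w) :
    Fil w d (C a * X ^ j) := by
  intro l
  rw [coeff_C_mul_X_pow]
  split_ifs with hl
  · rw [hl]; exact h
  · simp

lemma Fil.C {σ : Type*} {w d : ℕ} {a : MvPolynomial σ k} (h : a.totalDegree ≤ d) :
    Fil w d (Polynomial.C a) := by
  have := Fil.C_mul_X_pow (w := w) (d := d) (j := 0) (a := a) (by omega)
  simpa using this

lemma totalDegree_tc (M : k[X]) {N : ℕ} (hN : M.natDegree = N + 1) {σ : Type*} (i : σ) (j : ℕ) :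
    (tc M (MvPolynomial.X i : MvPolynomial σ k) j).totalDegree ≤ N + 1 - j := by
  rw [tc, taylor_coeff, eval_eq_sum_range]
  refine MvPolynomial.totalDegree_finsetSum_le fun l hl => ?_
  rw [Finset.mem_range] at hl
  have h1 := natDegree_hasseDeriv_le (M.map (algebraMap k (MvPolynomial σ k))) j
  rw [natDegree_map_eq_of_injective (algebraMap k (MvPolynomial σ k)).injective, hN] at h1
  rw [hasseDeriv_coeff, coeff_map, MvPolynomial.algebraMap_eq, ← map_natCast MvPolynomial.C,
    ← map_mul]
  refine (MvPolynomial.totalDegree_mul _ _).trans ?_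
  rw [MvPolynomial.totalDegree_C, MvPolynomial.totalDegree_X_pow]
  omega

lemma Fil_zeta (M : k[X]) {N : ℕ} (hN : M.natDegree = N + 1) {σ : Type*} (i : σ)
    (c : MvPolynomial σ k) (hc : c.totalDegree ≤ N * (N - 1)) (t : ℕ) :
    Fil ((N + 1) * (N - 1)) 0 (zeta M N (MvPolynomial.X i) c t) := by
  induction t with
  | zero => exact Fil.one
  | succ t ih =>
    refine Fil.one.sub (Fil.sum fun j hj => ?_)
    rw [Finset.mem_range] at hj
    have h1 := (ih.pow (j + 2))
    rw [mul_zero] at h1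
    refine Fil.mul (d := 0) (Fil.C_mul_X_pow ?_) h1
    have h2 := totalDegree_tc M hN i (j + 2)
    have h3 := totalDegree_tc M hN i 1
    have h4 := MvPolynomial.totalDegree_mul
      (tc M (MvPolynomial.X i : MvPolynomial σ k) (j + 2) * tc M (MvPolynomial.X i) 1 ^ j) (c ^ (j + 1))
    have h5 := MvPolynomial.totalDegree_mul
      (tc M (MvPolynomial.X i : MvPolynomial σ k) (j + 2)) (tc M (MvPolynomial.X i) 1 ^ j)
    have h6 := MvPolynomial.totalDegree_pow (tc M (MvPolynomial.X i : MvPolynomial σ k) 1) j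
    have h7 := MvPolynomial.totalDegree_pow c (j + 1)
    have h8 := Nat.mul_le_mul_left (j + 1) hc
    have h9 := Nat.mul_le_mul_left j h3
    obtain ⟨N', rfl⟩ : ∃ N', N = N' + 1 := ⟨N - 1, by omega⟩
    have h10 : N' + 1 + 1 - (j + 2) + j = N' := by omega
    simp only [Nat.add_sub_cancel] at *
    nlinarith

end

/-! ### Universal local curves -/

section
variable {k : Type u} [Field k]

/-- The polynomials `c_i` such that `c_i M'(X_i)²` takes the same value for all `i` at the points
with distinct coordinates in the same fibre of `M`. -/
noncomputable def cc (M : k[X]) {r : ℕ} (i : Fin (r + 1)) : MvPolynomial (Fin (r + 1)) k :=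
  ∏ j ∈ Finset.univ.erase i, (-(∏ l ∈ (Finset.univ.erase i).erase j,
    (MvPolynomial.X j - MvPolynomial.X l)) *
      ((G M (ext MvPolynomial.X) (r + 1)).eval (MvPolynomial.X j)) ^ 2)

lemma totalDegree_cc {M : k[X]} {N r : ℕ} (hM : M.Monic) (hN : M.natDegree = N + 1) (hr : r ≤ N)
    (i : Fin (r + 1)) : (cc M i).totalDegree ≤ N * (N - 1) := by
  have h1 : ∀ j ∈ Finset.univ.erase i, (-(∏ l ∈ (Finset.univ.erase i).erase j,
    (MvPolynomial.X j - MvPolynomial.X l)) *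
      ((G M (ext (MvPolynomial.X : Fin (r + 1) → MvPolynomial (Fin (r + 1)) k)) (r + 1)).eval
        (MvPolynomial.X j)) ^ 2).totalDegree ≤ (r - 1) + 2 * (N - r) := by
    intro j hj
    refine (MvPolynomial.totalDegree_mul _ _).trans (add_le_add ?_ ?_)
    · rw [MvPolynomial.totalDegree_neg]
      refine (MvPolynomial.totalDegree_finsetProd _ _).trans ?_
      have h2 : ∀ l ∈ (Finset.univ.erase i).erase j,
          (MvPolynomial.X j - MvPolynomial.X l : MvPolynomial (Fin (r + 1)) k).totalDegree ≤ 1 := by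
        intro l _
        refine (MvPolynomial.totalDegree_sub _ _).trans ?_
        simp
      refine (Finset.sum_le_card_nsmul _ _ 1 h2).trans ?_
      rw [Finset.card_erase_of_mem hj, Finset.card_erase_of_mem (Finset.mem_univ i)]
      simp
    · refine (MvPolynomial.totalDegree_pow _ _).trans (Nat.mul_le_mul_left 2 ?_)
      have hd := (G_monic hM hN (ext (MvPolynomial.X : Fin (r + 1) → MvPolynomial (Fin (r + 1)) k))
        (r + 1) (by omega)).2
      rw [eval_eq_sum_range, hd]
      refine MvPolynomial.totalDegree_finsetSum_le fun l hl => ?_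
      rw [Finset.mem_range] at hl
      refine (MvPolynomial.totalDegree_mul _ _).trans ?_
      rw [MvPolynomial.totalDegree_X_pow]
      have := (G_coeff (r := r) hM hN (r + 1) (by omega) l).1
      omega
  refine (MvPolynomial.totalDegree_finsetProd _ _).trans
    ((Finset.sum_le_card_nsmul _ _ _ h1).trans ?_)
  rw [Finset.card_erase_of_mem (Finset.mem_univ i)]
  simp only [Finset.card_univ, Fintype.card_fin, Nat.add_sub_cancel, smul_eq_mul]
  rcases Nat.eq_zero_or_pos r with h0 | h0
  · simp [h0]
  · obtain ⟨s, rfl⟩ : ∃ s, r = s + 1 := ⟨r - 1, by omega⟩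
    obtain ⟨u, rfl⟩ : ∃ u, N = s + 1 + u := ⟨N - (s + 1), by omega⟩
    have e1 : s + 1 - 1 = s := by omega
    have e2 : s + 1 + u - (s + 1) = u := by omega
    have e3 : s + 1 + u - 1 = s + u := by omega
    rw [e1, e2, e3]
    nlinarith [Nat.le_mul_self u]

lemma RootSys.derivative_factor {M : k[X]} {r : ℕ} {A : Type*} [CommRing A] [IsDomain A]
    [Algebra k A] {y : Fin (r + 1) → A} (hy : RootSys M y) (i : Fin (r + 1)) :
    aeval (y i) (derivative M) = (∏ j ∈ Finset.univ.erase i, (y i - y j)) *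
      (G M (ext y) (r + 1)).eval (y i) := by
  have h := hy.G_prod (Fin.last r)
  rw [Fin.val_last, Finset.prod_range] at h
  simp only [ext_apply] at h
  have h1 := congrArg (fun p => (derivative p).eval (y i)) h
  simp only [derivative_mul, eval_add, eval_mul, eval_derivative_prod, derivative_sub, derivative_C,
    sub_zero, derivative_map, eval_map_algebraMap] at h1
  rw [← h1, eval_prod, Finset.prod_eq_zero (Finset.mem_univ i) (by simp)]
  ring

/-- The common value of the `c_i M'(y_i)²`. -/
lemma RootSys.cc_mul {M : k[X]} {r : ℕ} {y : Fin (r + 1) → k} (hy : RootSys M y)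
    (i : Fin (r + 1)) :
    MvPolynomial.eval y (cc M i) * aeval (y i) (derivative M) ^ 2 =
      ∏ j, (aeval (y j) (derivative M) * (G M (ext y) (r + 1)).eval (y j)) := by
  have hG : ∀ j, MvPolynomial.eval y ((G M (ext MvPolynomial.X) (r + 1)).eval (MvPolynomial.X j)) =
      (G M (ext y) (r + 1)).eval (y j) := by
    intro j
    have hmap := G_map M (MvPolynomial.aeval y : MvPolynomial (Fin (r + 1)) k →ₐ[k] k)
      (ext MvPolynomial.X) (r + 1)
    rw [map_ext] at hmap
    simp only [MvPolynomial.aeval_X] at hmap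
    rw [← hmap, eval_map]
    have h2 := (eval₂_hom (p := G M (ext MvPolynomial.X) (r + 1))
      ((MvPolynomial.aeval y : MvPolynomial (Fin (r + 1)) k →ₐ[k] k) :
        MvPolynomial (Fin (r + 1)) k →+* k) (MvPolynomial.X j)).symm
    simp only [RingHom.coe_coe, MvPolynomial.aeval_X] at h2
    rw [← h2, MvPolynomial.aeval_eq_eval]
  rw [← Finset.mul_prod_erase _ _ (Finset.mem_univ i)]
  have h1 : MvPolynomial.eval y (cc M i) * ∏ j ∈ Finset.univ.erase i, (y i - y j) =
      ∏ j ∈ Finset.univ.erase i, (aeval (y j) (derivative M) * (G M (ext y) (r + 1)).eval (y j)) := by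
    rw [cc, map_prod, ← Finset.prod_mul_distrib]
    refine Finset.prod_congr rfl fun j hj => ?_
    rw [hy.derivative_factor j]
    simp only [map_mul, map_neg, map_prod, map_pow, hG, map_sub, MvPolynomial.eval_X]
    have hij : i ∈ Finset.univ.erase j :=
      Finset.mem_erase.mpr ⟨(Finset.ne_of_mem_erase hj).symm, Finset.mem_univ i⟩
    rw [← Finset.mul_prod_erase _ _ hij, Finset.erase_right_comm]
    ring
  rw [← h1, hy.derivative_factor i]
  ring

/-- Universal approximate solutions `τ_i(e) = X_i + O(e)` of `M(τ_i) = M + c e`, where `c` is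
independent of `i`. -/
lemma exists_tau {M : k[X]} {N r : ℕ} (hM : M.Monic) (hN : M.natDegree = N + 1) (hN1 : 1 ≤ N)
    (hr : r ≤ N) (m : ℕ) :
    ∃ τ : Fin (r + 1) → (MvPolynomial (Fin (r + 1)) k)[X],
      (∀ i, Fil ((N + 1) * (N - 1)) 1 (τ i)) ∧ (∀ i, (τ i).coeff 0 = MvPolynomial.X i) ∧
      ∀ y : Fin (r + 1) → k, RootSys M y → (∀ i, (derivative M).eval (y i) ≠ 0) →
        ∃ c : k, c ≠ 0 ∧ ∀ i, X ^ m ∣ aeval ((τ i).map (MvPolynomial.eval y)) M -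
          (C (M.eval (y 0)) + C c * X) := by
  refine ⟨fun i => C (MvPolynomial.X i) + C (tc M (MvPolynomial.X i) 1 * cc M i) * X ^ 1 *
    zeta M N (MvPolynomial.X i) (cc M i) m, fun i => ?_, fun i => ?_, fun y hy hy' => ?_⟩
  · refine (Fil.C (by simp)).add ?_
    refine Fil.mul (d' := 0) (Fil.C_mul_X_pow ?_) (Fil_zeta M hN i _ (totalDegree_cc hM hN hr i) m)
    refine (MvPolynomial.totalDegree_mul _ _).trans ((add_le_add (totalDegree_tc M hN i 1)
      (totalDegree_cc hM hN hr i)).trans ?_)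
    obtain ⟨N', rfl⟩ : ∃ N', N = N' + 1 := ⟨N - 1, by omega⟩
    simp only [Nat.add_sub_cancel]
    nlinarith
  · rw [coeff_add, coeff_C_zero, mul_assoc, coeff_C_mul, pow_one, coeff_X_mul_zero, mul_zero,
      add_zero]
  · refine ⟨∏ j, (aeval (y j) (derivative M) * (G M (ext y) (r + 1)).eval (y j)), ?_, fun i => ?_⟩
    · rw [Finset.prod_ne_zero_iff]
      intro j _
      have h1 : aeval (y j) (derivative M) ≠ 0 := by
        rw [coe_aeval_eq_eval]; exact hy' j
      refine mul_ne_zero h1 ?_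
      rw [hy.derivative_factor j] at h1
      exact right_ne_zero_of_mul h1
    · have h1 := zeta_spec M hN (y i) (MvPolynomial.eval y (cc M i)) m
      refine (pow_dvd_pow X (by omega : m ≤ m + 2)).trans ?_
      have h2 : ((MvPolynomial.aeval y : MvPolynomial (Fin (r + 1)) k →ₐ[k] k) :
          MvPolynomial (Fin (r + 1)) k →+* k) = MvPolynomial.eval y := by
        exact RingHom.ext fun φ => by rw [RingHom.coe_coe, MvPolynomial.aeval_eq_eval]
      have h3 := zeta_map M N (MvPolynomial.aeval y : MvPolynomial (Fin (r + 1)) k →ₐ[k] k)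
        (MvPolynomial.X i) (cc M i) m
      have h4 := tc_map M (MvPolynomial.aeval y : MvPolynomial (Fin (r + 1)) k →ₐ[k] k)
        (MvPolynomial.X i) 1
      have h5 : ∀ φ, (MvPolynomial.aeval y : MvPolynomial (Fin (r + 1)) k →ₐ[k] k) φ =
          MvPolynomial.eval y φ := fun φ => by rw [MvPolynomial.aeval_eq_eval]
      rw [h2, MvPolynomial.aeval_X, h5] at h3
      rw [MvPolynomial.aeval_X, h5] at h4
      have h6 := hy.cc_mul i
      rw [← tc_one] at h6
      convert h1 using 2
      · congr 2
        simp only [Polynomial.map_add, Polynomial.map_mul, map_C, map_X, pow_one,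
          h3, map_mul, h4, MvPolynomial.eval_X]
      · rw [← h6, hy.eq i, coe_aeval_eq_eval, mul_comm (MvPolynomial.eval y (cc M i))]

end

/-! ### Construction of the coefficients -/

section
variable {k : Type u} [Field k]

lemma Fil.mono {σ : Type*} {w d d' : ℕ} {p : (MvPolynomial σ k)[X]} (h : Fil w d p)
    (hd : d ≤ d') : Fil w d' p := fun l => (h l).trans (by omega)

lemma Fil_aeval_mon {σ : Type*} {N r A w : ℕ} {τ : Fin (r + 1) → (MvPolynomial σ k)[X]}
    (hτ : ∀ i, Fil w 1 (τ i)) (c : Red N r A) :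
    Fil w (A + sdeg N r) (MvPolynomial.aeval τ (mon k c)) := by
  rw [mon, map_mul, map_prod]
  simp only [map_pow, MvPolynomial.aeval_X]
  refine Fil.mul (((hτ 0).pow _).mono ?_) ((Fil.prod fun j _ => (hτ j.succ).pow _).mono ?_)
  · have := c.1.isLt
    omega
  · refine Finset.sum_le_sum fun j _ => ?_
    have := (c.2 j).isLt
    omega

/-- Linear algebra: if there are more coefficients `a c c'` than linear conditions, then some nonzero
choice of them gives an auxiliary function vanishing to order `m` along all the curves
`e ↦ τ(e)` through the points with distinct coordinates in the same fibre of `M`. -/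
lemma exists_coeffs {M : k[X]} {N r : ℕ} (hM : M.Monic) (hN : M.natDegree = N + 1)
    (hr : r ≤ N) {w : ℕ} {τ : Fin (r + 1) → (MvPolynomial (Fin (r + 1)) k)[X]}
    (hτ : ∀ i, Fil w 1 (τ i)) (σ : Fin (r + 1) → Fin (r + 1)) {m A B : ℕ}
    (hcount : ∑ l ∈ Finset.range m, (A + sdeg N r + (B + sdeg N r) + l * w + 1) * N.descFactorial r <
      (A + 1) * N.descFactorial r * ((B + 1) * N.descFactorial r)) :
    ∃ a : Red N r A → Red N r B → k, a ≠ 0 ∧ ∀ y : Fin (r + 1) → k, RootSys M y →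
      X ^ m ∣ ∑ c', ∑ c, C (a c c') *
        MvPolynomial.aeval (fun i => (τ i).map (MvPolynomial.eval y)) (mon k c) *
          C (MvPolynomial.eval (fun i => y (σ i)) (mon k c')) := by
  set Ψ : Red N r A → Red N r B → (MvPolynomial (Fin (r + 1)) k)[X] := fun c c' =>
    MvPolynomial.aeval τ (mon k c) * C (MvPolynomial.rename σ (mon k c')) with hΨ
  have hΨdeg : ∀ c c', Fil w (A + sdeg N r + (B + sdeg N r)) (Ψ c c') := fun c c' =>
    (Fil_aeval_mon hτ c).mul (Fil.C ((MvPolynomial.totalDegree_rename_le _ _).trans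
      (totalDegree_mon c')))
  have hred := fun (l : ℕ) c c' => mem_redSub hM hN hr (hΨdeg c c' l)
  choose u hu using hred
  let T : (Red N r A → Red N r B → k) →ₗ[k]
      (∀ l : Fin m, Red N r (A + sdeg N r + (B + sdeg N r) + l * w) → k) :=
    { toFun := fun a l d => ∑ c', ∑ c, a c c' * u l c c' d
      map_add' := by
        intro a b
        ext l d
        simp only [Pi.add_apply, add_mul, Finset.sum_add_distrib]
      map_smul' := by
        intro t a
        ext l d
        simp only [Pi.smul_apply, smul_eq_mul, mul_assoc, Finset.mul_sum, RingHom.id_apply] }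
  have hT : LinearMap.ker T ≠ ⊥ := by
    apply LinearMap.ker_ne_bot_of_finrank_lt
    rw [Module.finrank_pi_fintype, Module.finrank_pi_fintype]
    simp only [Module.finrank_fintype_fun_eq_card, card_Red, Finset.sum_const, Finset.card_univ,
      smul_eq_mul]
    rw [Finset.sum_range] at hcount
    exact hcount
  obtain ⟨a, haT, ha0⟩ := (Submodule.ne_bot_iff _).mp hT
  refine ⟨a, ha0, fun y hy => ?_⟩
  have hmap : ∀ c c', C (a c c') *
        MvPolynomial.aeval (fun i => (τ i).map (MvPolynomial.eval y)) (mon k c) *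
          C (MvPolynomial.eval (fun i => y (σ i)) (mon k c')) =
      C (a c c') * (Ψ c c').map (MvPolynomial.eval y) := by
    intro c c'
    rw [hΨ, mul_assoc]
    simp only [Polynomial.map_mul, map_C, MvPolynomial.eval_rename]
    congr 2
    rw [mon]
    simp only [map_mul, map_prod, map_pow, MvPolynomial.aeval_X, Polynomial.map_mul,
      Polynomial.map_pow, Polynomial.map_prod]
  rw [X_pow_dvd_iff]
  intro l hl
  simp only [hmap, finsetSum_coeff, coeff_C_mul, coeff_map]
  have h0 : ∀ d, ∑ c', ∑ c, a c c' * u l c c' d = 0 := fun d =>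
    congrFun (congrFun (LinearMap.mem_ker.mp haT) (⟨l, hl⟩ : Fin m)) d
  calc ∑ c', ∑ c, a c c' * MvPolynomial.eval y ((Ψ c c').coeff l)
      = ∑ c', ∑ c, ∑ d, a c c' * u l c c' d * MvPolynomial.eval y (mon k d) := by
        refine Finset.sum_congr rfl fun c' _ => Finset.sum_congr rfl fun c _ => ?_
        rw [hu l c c' y hy, Finset.mul_sum]
        exact Finset.sum_congr rfl fun d _ => by ring
    _ = ∑ d, (∑ c', ∑ c, a c c' * u l c c' d) * MvPolynomial.eval y (mon k d) := by
        simp only [Finset.sum_mul]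
        symm
        rw [Finset.sum_comm]
        exact Finset.sum_congr rfl fun c' _ => Finset.sum_comm
    _ = 0 := by simp [h0]

end

/-! ### Vanishing of the norm -/

section
variable {k : Type u} [Field k]

/-- The tuple `tup z ι` is `z` composed with an injection fixing `0`. -/
lemma exists_tup_eq {N r : ℕ} (ι : Fin r ↪ Fin N) :
    ∃ f : Fin (r + 1) → Fin (N + 1), f 0 = 0 ∧ Function.Injective f ∧
      ∀ {S : Type u} (z : Fin (N + 1) → S) i, tup z ι i = z (f i) := by
  refine ⟨Fin.cons 0 (fun j => (ι j).succ), rfl, Fin.cons_injective_iff.mpr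
      ⟨by rintro ⟨j, hj⟩; exact Fin.succ_ne_zero _ hj,
        fun a b hab => ι.injective (Fin.succ_injective _ hab)⟩, fun z i => ?_⟩
  refine Fin.cases rfl (fun j => rfl) i

/-- A polynomial whose value at a power series `ρ = α + O(X)` is divisible by `X ^ m` has a zero of
order at least `m` at `α`, provided that `ρ - α` has order one. -/
lemma pow_dvd_of_aeval {α : k} {ρ : PowerSeries k} (hρ0 : PowerSeries.constantCoeff ρ = α)
    (hρ : ρ - PowerSeries.C α ∣ PowerSeries.X) {P : k[X]} {m : ℕ}
    (h : PowerSeries.X ^ m ∣ aeval ρ P) : (X - C α) ^ m ∣ P := by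
  by_cases hP : P = 0
  · rw [hP]; exact dvd_zero _
  obtain ⟨R, hR, hRα⟩ := exists_eq_pow_rootMultiplicity_mul_and_not_dvd P hP α
  have hcc : PowerSeries.constantCoeff (aeval ρ R) = R.eval α := by
    have h1 := Polynomial.hom_eval₂ R (algebraMap k (PowerSeries k)) PowerSeries.constantCoeff ρ
    rw [← aeval_def, hρ0] at h1
    rw [h1]
    have : (PowerSeries.constantCoeff (R := k)).comp (algebraMap k (PowerSeries k)) = RingHom.id k := by
      ext a; simp
    rw [this, eval₂_id]
  have hunit : IsUnit (aeval ρ R) := by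
    rw [PowerSeries.isUnit_iff_constantCoeff, hcc, isUnit_iff_ne_zero]
    rwa [dvd_iff_isRoot] at hRα
  have h2 : aeval ρ P = (ρ - PowerSeries.C α) ^ P.rootMultiplicity α * aeval ρ R := by
    conv_lhs => rw [hR]
    simp
  rw [h2, hunit.dvd_mul_right] at h
  have h3 := h.trans (pow_dvd_pow_of_dvd hρ _)
  have h4 : m ≤ P.rootMultiplicity α :=
    (pow_dvd_pow_iff PowerSeries.X_ne_zero PowerSeries.X_prime.not_isUnit).mp h3
  exact (pow_dvd_pow _ h4).trans (pow_rootMultiplicity_dvd P α)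

/-- The norm of the auxiliary polynomial vanishes to order `m` at each point all of whose Frobenius
conjugates, forming a cycle of length `r + 1`, lie in the same fibre of `M`. -/
lemma pow_dvd_norm {M : k[X]} {N r : ℕ} (hM : M.Monic) (hN : M.natDegree = N + 1)
    {p e : ℕ} [ExpChar k p] {A B m : ℕ} (hm : m ≤ p ^ e)
    {τ : Fin (r + 1) → (MvPolynomial (Fin (r + 1)) k)[X]}
    (hτ0 : ∀ i, (τ i).coeff 0 = MvPolynomial.X i)
    (hτ : ∀ y : Fin (r + 1) → k, RootSys M y → (∀ i, (derivative M).eval (y i) ≠ 0) →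
        ∃ c : k, c ≠ 0 ∧ ∀ i, X ^ m ∣ aeval ((τ i).map (MvPolynomial.eval y)) M -
          (C (M.eval (y 0)) + C c * X))
    {σ : Fin (r + 1) → Fin (r + 1)} {a : Red N r A → Red N r B → k}
    (ha : ∀ y : Fin (r + 1) → k, RootSys M y →
      X ^ m ∣ ∑ c', ∑ c, C (a c c') *
        MvPolynomial.aeval (fun i => (τ i).map (MvPolynomial.eval y)) (mon k c) *
          C (MvPolynomial.eval (fun i => y (σ i)) (mon k c')))
    {P : k[X]}
    (hP : ∀ (R : Type u) [CommRing R] [IsDomain R] [Algebra k R] (x : Fin (N + 1) → R),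
      RootSys M x → aeval (x 0) P = ∏ ι : Fin r ↪ Fin N, MvPolynomial.aeval (tup x ι) (Phi (p ^ e) a))
    {x : Fin (N + 1) → k} (hx : RootSys M x) {ι : Fin r ↪ Fin N}
    (hσ : ∀ i, tup x ι (σ i) = tup x ι i ^ p ^ e) : (X - C (x 0)) ^ m ∣ P := by
  classical
  obtain ⟨f, hf0, hfinj, hf⟩ := exists_tup_eq.{u} ι
  set y := tup x ι with hydef
  have hyf : ∀ i, y i = x (f i) := hf x
  have hy : RootSys M y := ⟨fun i j hij => hfinj (hx.inj (by rw [← hyf, ← hyf, hij])),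
    fun i => by rw [hyf, hyf, hx.eq, hf0]⟩
  obtain ⟨c, hc0, hc⟩ := hτ y hy fun i => by
    have := hx.derivative_ne_zero hM hN (f i)
    rwa [coe_aeval_eq_eval, ← hyf] at this
  set T : PowerSeries k := PowerSeries.C (M.eval (x 0)) + PowerSeries.C c * PowerSeries.X with hT
  obtain ⟨hfm, hfd⟩ := natDegree_map_sub_C (R := PowerSeries k) hM hN T
  obtain ⟨ρ, hρ0, hρ⟩ := hensel_list _ hfm hfd x hx.inj (fun i => by
    have h1 := hx.eq i
    simp only [coe_aeval_eq_eval] at h1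
    simp [Polynomial.map_map, hT, h1])
  have hMρ : ∀ i, aeval (ρ i) M = T := by
    intro i
    have h1 := congrArg (eval (ρ i)) hρ
    rw [eval_prod, Finset.prod_eq_zero (Finset.mem_univ i) (by simp), eval_sub, eval_C,
      eval_map_algebraMap] at h1
    exact sub_eq_zero.mp h1
  have hρsys : RootSys M ρ := ⟨fun i j hij => hx.inj (by rw [← hρ0, ← hρ0, hij]),
    fun i => by rw [hMρ, hMρ]⟩
  set t : Fin (r + 1) → PowerSeries k := fun i =>
    (((τ i).map (MvPolynomial.eval y) : k[X]) : PowerSeries k) with ht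
  have ht0 : ∀ i, PowerSeries.constantCoeff (t i) = y i := by
    intro i
    rw [ht, ← PowerSeries.coeff_zero_eq_constantCoeff_apply]
    simp [hτ0]
  -- the power series `ρ (f i)` and the polynomials `t i` agree modulo `X ^ m`
  have htρ : ∀ i, PowerSeries.X ^ m ∣ t i - ρ (f i) := by
    intro i
    have h1 : PowerSeries.X ^ m ∣ aeval (t i) M - T := by
      obtain ⟨z, hz⟩ := hc i
      have h2 := congrArg (Polynomial.coeToPowerSeries.algHom k) hz
      rw [map_sub, ← aeval_algHom_apply, hyf 0, hf0] at h2
      refine ⟨(z : PowerSeries k), ?_⟩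
      simpa [Polynomial.coeToPowerSeries.algHom_apply, hT, ht] using h2
    have h3 : aeval (t i) M - T = ∏ j, (t i - ρ j) := by
      have h4 := congrArg (eval (t i)) hρ
      rw [eval_sub, eval_C, eval_map_algebraMap, eval_prod] at h4
      simpa using h4
    rw [h3, ← Finset.mul_prod_erase _ _ (Finset.mem_univ (f i))] at h1
    refine (IsUnit.dvd_mul_right ?_).mp h1
    rw [PowerSeries.isUnit_iff_constantCoeff, isUnit_iff_ne_zero, map_prod,
      Finset.prod_ne_zero_iff]
    intro j hj
    rw [map_sub, hρ0, ht0, hyf, sub_ne_zero]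
    exact fun h => (Finset.ne_of_mem_erase hj) (hx.inj h).symm
  have hfrob : ∀ i, PowerSeries.X ^ m ∣ ρ (f i) ^ p ^ e - PowerSeries.C (y (σ i)) := by
    intro i
    have : ExpChar (PowerSeries k) p :=
      expChar_of_injective_ringHom (PowerSeries.C_injective (R := k)) p
    rw [hσ, map_pow, ← sub_pow_expChar_pow]
    refine (pow_dvd_pow _ hm).trans (pow_dvd_pow_of_dvd ?_ _)
    rw [PowerSeries.X_dvd_iff, map_sub, hρ0, hyf]
    simp
  have hPhi : PowerSeries.X ^ m ∣ MvPolynomial.aeval (tup ρ ι) (Phi (p ^ e) a) := by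
    have h0 := ha y hy
    obtain ⟨z, hz⟩ := h0
    rw [← Ideal.mem_span_singleton, ← Ideal.Quotient.eq_zero_iff_mem]
    set I := Ideal.span {(PowerSeries.X : PowerSeries k) ^ m} with hI
    have hq1 : ∀ i, Ideal.Quotient.mk I (ρ (f i)) = Ideal.Quotient.mk I (t i) := fun i =>
      (Ideal.Quotient.eq.mpr (Ideal.mem_span_singleton.mpr (htρ i))).symm
    have hq2 : ∀ i, Ideal.Quotient.mk I (ρ (f i)) ^ p ^ e = Ideal.Quotient.mk I (PowerSeries.C (y (σ i))) :=
      fun i => by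
        rw [← map_pow]
        exact Ideal.Quotient.eq.mpr (Ideal.mem_span_singleton.mpr (hfrob i))
    have hcoe : ∀ g : k[X], Polynomial.coeToPowerSeries.algHom k g = (g : PowerSeries k) := by
      intro g
      simp [Polynomial.coeToPowerSeries.algHom_apply]
    have hmon : ∀ (c : Red N r A), Ideal.Quotient.mk I (MvPolynomial.aeval (tup ρ ι) (mon k c)) =
        Ideal.Quotient.mk I (Polynomial.coeToPowerSeries.algHom k
          (MvPolynomial.aeval (fun i => (τ i).map (MvPolynomial.eval y)) (mon k c))) := by
      intro c
      simp only [mon, map_mul, map_prod, map_pow, MvPolynomial.aeval_X, hf, hq1, ht,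
        ← hcoe]
    have hmon' : ∀ (c : Red N r B), Ideal.Quotient.mk I (MvPolynomial.aeval (tup ρ ι) (mon k c)) ^ p ^ e =
        Ideal.Quotient.mk I (PowerSeries.C (MvPolynomial.eval (fun i => y (σ i)) (mon k c))) := by
      intro c
      simp only [mon, map_mul, map_prod, map_pow, MvPolynomial.aeval_X, MvPolynomial.eval_X, hf,
        mul_pow, ← Finset.prod_pow, ← pow_mul, mul_comm _ (p ^ e)]
      simp only [pow_mul, hq2]
    have hgoal : Ideal.Quotient.mk I (MvPolynomial.aeval (tup ρ ι) (Phi (p ^ e) a)) =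
        Ideal.Quotient.mk I (Polynomial.coeToPowerSeries.algHom k (X ^ m * z)) := by
      rw [← hz, Phi]
      simp only [map_sum, map_mul, map_pow, hmon, hmon']
      refine Finset.sum_congr rfl fun c' _ => ?_
      rw [Finset.sum_mul]
      refine Finset.sum_congr rfl fun c _ => ?_
      simp only [hcoe, Polynomial.coe_C, MvPolynomial.aeval_C, PowerSeries.algebraMap_apply,
        Algebra.algebraMap_self_apply]
    rw [hgoal, Ideal.Quotient.eq_zero_iff_mem, hI, Ideal.mem_span_singleton, map_mul, map_pow, hcoe X,
      Polynomial.coe_X]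
    exact dvd_mul_right _ _
  refine pow_dvd_of_aeval (hρ0 0) ?_ (m := m) ?_
  · have h1 : ρ 0 - PowerSeries.C (x 0) ∣ PowerSeries.C c * PowerSeries.X := by
      have h2 : PowerSeries.C c * PowerSeries.X = aeval (ρ 0) M - aeval (PowerSeries.C (x 0)) M := by
        rw [hMρ, hT]
        have := aeval_algebraMap_apply (PowerSeries k) (x 0) M
        rw [PowerSeries.algebraMap_apply, Algebra.algebraMap_self_apply] at this
        rw [this]
        simp
      rw [h2, ← eval_map_algebraMap, ← eval_map_algebraMap]
      exact sub_dvd_eval_sub _ _ _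
    exact (IsUnit.dvd_mul_left ((isUnit_iff_ne_zero.mpr hc0).map (PowerSeries.C (R := k)))).mp h1
  · rw [hP _ ρ hρsys]
    exact hPhi.trans (Finset.dvd_prod_of_mem _ (Finset.mem_univ ι))

end

/-! ### Stepanov's bound -/

section
variable {k : Type u} [Field k]

lemma card_mul_le_natDegree {P : k[X]} (hP : P ≠ 0) {m : ℕ} {S : Finset k}
    (h : ∀ α ∈ S, (X - C α) ^ m ∣ P) : m * S.card ≤ P.natDegree := by
  have h1 : ∏ α ∈ S, (X - C α) ^ m ∣ P := by
    refine Finset.prod_dvd_of_coprime (fun a _ b _ hab => ?_) h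
    exact (pairwise_coprime_X_sub_C Function.injective_id hab).pow
  have h2 := natDegree_le_of_dvd h1 hP
  rw [natDegree_prod_of_monic _ _ fun i _ => (monic_X_sub_C i).pow m] at h2
  simpa [natDegree_pow, mul_comm] using h2

/-- Stepanov's bound with free parameters `A`, `B`, `m`. -/
lemma stepanov [IsAlgClosed k] {M : k[X]} {N : ℕ} (h : Morse M N) (hN : 1 ≤ N)
    {p e : ℕ} [ExpChar k p] {r A B m : ℕ} (hr : r ≤ N)
    (hA : N.descFactorial r * (A + sdeg N r) < p ^ e) (hm : m ≤ p ^ e)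
    (hcount : ∑ l ∈ Finset.range m,
      (A + sdeg N r + (B + sdeg N r) + l * ((N + 1) * (N - 1)) + 1) * N.descFactorial r <
        (A + 1) * N.descFactorial r * ((B + 1) * N.descFactorial r))
    (S : Finset k) (hS : ∀ α ∈ S, ∃ x : Fin (N + 1) → k, RootSys M x ∧ x 0 = α ∧
      ∃ ι : Fin r ↪ Fin N, ∀ i, tup x ι (i + 1) = tup x ι i ^ p ^ e) :
    m * S.card ≤ N.descFactorial r * (A + sdeg N r + p ^ e * (B + sdeg N r)) := by
  obtain ⟨τ, hτ1, hτ2, hτ3⟩ := exists_tau h.monic h.deg hN hr m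
  obtain ⟨a, ha0, ha⟩ := exists_coeffs h.monic h.deg hr hτ1 (fun i => i + 1) hcount
  obtain ⟨P, hP⟩ := exists_norm M h.monic h.deg (Phi (p ^ e) a)
  refine le_trans ?_ (natDegree_norm_le h.monic h.deg h.char (totalDegree_Phi (p ^ e) a) hP)
  refine card_mul_le_natDegree (norm_Phi_ne_zero h hN hr hA a ha0 hP) fun α hα => ?_
  obtain ⟨x, hx, rfl, ι, hι⟩ := hS α hα
  exact pow_dvd_norm h.monic h.deg hm hτ2 hτ3 ha hP hx hι

lemma two_mul_sum_le (K w δ m : ℕ) :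
    2 * ∑ l ∈ Finset.range m, (K + l * w + 1) * δ ≤ δ * (2 * m * (K + 1) + w * m ^ 2) := by
  induction m with
  | zero => simp
  | succ m ih =>
    rw [Finset.sum_range_succ, mul_add]
    refine (add_le_add_left ih _).trans ?_
    nlinarith [Nat.zero_le (δ * w)]

/-- The choice of the parameters in Stepanov's bound. -/
lemma exists_params {q m δ s w : ℕ} (hδ : 1 ≤ δ) (hmq : m ^ 2 ≤ q) (hs : 4 * (δ * s) ≤ m)
    (hw : 2 * (δ * w) ≤ m) (hm : 6 ≤ m) :
    ∃ A B, δ * (A + s) < q ∧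
      ∑ l ∈ Finset.range m, (A + s + (B + s) + l * w + 1) * δ < (A + 1) * δ * ((B + 1) * δ) ∧
      2 * (1 + δ * (B + s)) ≤ 2 * m + δ * (w + 2 * s) + 6 := by
  have hmm : m * m ≤ q := by nlinarith
  have hsq : s ≤ (q - 1) / δ := by
    rw [Nat.le_div_iff_mul_le (by omega)]
    have : s * δ = δ * s := mul_comm _ _
    have : m * 6 ≤ m * m := Nat.mul_le_mul_left _ hm
    omega
  obtain ⟨A, hA⟩ := Nat.exists_eq_add_of_le' hsq
  set B := (2 * m + δ * w + 4) / (2 * δ) with hB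
  have hA1 : δ * (A + s) ≤ q - 1 := by
    rw [← hA]; exact Nat.mul_div_le _ _
  have hA2 : q ≤ δ * (A + s + 1) := by
    have := Nat.lt_mul_div_succ (q - 1) (by omega : 0 < δ)
    rw [hA] at this
    omega
  have hB1 : 2 * δ * B ≤ 2 * m + δ * w + 4 := Nat.mul_div_le _ _
  have hB2 : 2 * m + δ * w + 5 ≤ 2 * δ * (B + 1) := by
    have := Nat.lt_mul_div_succ (2 * m + δ * w + 4) (by omega : 0 < 2 * δ)
    rw [← hB] at this
    omega
  refine ⟨A, B, ?_, ?_, ?_⟩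
  · have : m * 6 ≤ m * m := Nat.mul_le_mul_left _ hm
    omega
  · have h1 := two_mul_sum_le (A + s + (B + s)) w δ m
    suffices δ * (2 * m * (A + s + (B + s) + 1) + w * m ^ 2) <
        2 * ((A + 1) * δ * ((B + 1) * δ)) by omega
    zify at *
    generalize (A : ℤ) = A at *
    generalize (B : ℤ) = B at *
    set D : ℤ := δ * (A + 1) with hD
    have hD1 : (m : ℤ) ^ 2 - δ * s ≤ D := by rw [hD]; nlinarith
    have hDm : 0 ≤ D - m := by nlinarith
    have h2 : ((2 : ℤ) * m + δ * w + 5) * (D - m) ≤ 2 * δ * (B + 1) * (D - m) :=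
      mul_le_mul_of_nonneg_right hB2 hDm
    have h3 : (δ * (w : ℤ) + 5) * (m ^ 2 - δ * s) ≤ (δ * w + 5) * D :=
      mul_le_mul_of_nonneg_left hD1 (by positivity)
    have h4 : (δ * (w : ℤ)) * (δ * s) ≤ (δ * w) * m := mul_le_mul_of_nonneg_left (by nlinarith) (by positivity)
    have h5 : 4 * (δ * (s : ℤ)) * m ≤ m * m := mul_le_mul_of_nonneg_right hs (by positivity)
    have h6 : 2 * (δ * (w : ℤ)) * m ≤ m * m := mul_le_mul_of_nonneg_right hw (by positivity)
    have h7 : (6 : ℤ) * m ≤ m * m := mul_le_mul_of_nonneg_right hm (by positivity)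
    -- the inequality to be shown, up to the term `2 m δ`, in terms of `D = δ (A + 1)`
    have key : 2 * m * D + 4 * (δ * s) * m + (δ * w) * m ^ 2 < 2 * δ * (B + 1) * (D - m) := by
      nlinarith
    have hδ0 : (0 : ℤ) < δ := by omega
    have h8 : (δ : ℤ) * (2 * m * (A + s + (B + s) + 1) + w * m ^ 2) <
        2 * ((A + 1) * δ * ((B + 1) * δ)) := by
      have e1 : 2 * ((A + 1) * δ * ((B + 1) * δ)) - (δ : ℤ) * (2 * m * (A + s + (B + s) + 1) + w * m ^ 2)
        = (2 * δ * (B + 1) * (D - m) - (2 * m * D + 4 * (δ * s) * m + (δ * w) * m ^ 2)) + 2 * m * δ := by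
        rw [hD]; ring
      have : (0 : ℤ) ≤ 2 * m * δ := by positivity
      linarith
    exact h8
  · nlinarith

/-- Stepanov's bound for the number of points with a Frobenius cycle of length `r + 1`. -/
lemma stepanov_bound [IsAlgClosed k] {M : k[X]} {N : ℕ} (h : Morse M N) (hN : 1 ≤ N)
    {p e : ℕ} [ExpChar k p] {r m : ℕ} (hr : r ≤ N) (hmq : m ^ 2 ≤ p ^ e)
    (hqm : p ^ e ≤ m * (m + 2))
    (hs : 4 * (N.descFactorial r * sdeg N r) ≤ m)
    (hw : 2 * (N.descFactorial r * ((N + 1) * (N - 1))) ≤ m) (hm : 6 ≤ m)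
    (S : Finset k) (hS : ∀ α ∈ S, ∃ x : Fin (N + 1) → k, RootSys M x ∧ x 0 = α ∧
      ∃ ι : Fin r ↪ Fin N, ∀ i, tup x ι (i + 1) = tup x ι i ^ p ^ e) :
    2 * S.card ≤ 2 * p ^ e +
      (m + 2) * (N.descFactorial r * ((N + 1) * (N - 1) + 2 * sdeg N r) + 6) := by
  have hδ : 1 ≤ N.descFactorial r := Nat.descFactorial_pos.mpr hr
  obtain ⟨A, B, hA, hc, hB⟩ := exists_params hδ hmq hs hw hm
  have h1 := stepanov h hN hr hA (by nlinarith) hc S hS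
  generalize p ^ e = q at *
  generalize N.descFactorial r = δ at *
  generalize sdeg N r = s at *
  generalize (N + 1) * (N - 1) = w at *
  refine Nat.le_of_mul_le_mul_left (c := m) ?_ (by omega)
  have h2 : m * (2 * S.card) ≤ q * (2 * (1 + δ * (B + s))) := by nlinarith
  have h3 : q * (2 * (1 + δ * (B + s))) ≤ q * (2 * m + δ * (w + 2 * s) + 6) :=
    Nat.mul_le_mul_left _ hB
  have h4 : q * (δ * (w + 2 * s) + 6) ≤ m * (m + 2) * (δ * (w + 2 * s) + 6) :=
    Nat.mul_le_mul_right _ hqm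
  nlinarith

end

/-! ### Numerical estimates and Frobenius cycles -/

lemma sum_descFactorial_le (N : ℕ) :
    ∑ r ∈ Finset.range N, N.descFactorial r + 1 ≤ 2 * N.factorial := by
  induction N with
  | zero => simp
  | succ N ih =>
    rcases Nat.eq_zero_or_pos N with rfl | hN
    · simp
    rw [Finset.sum_range_succ']
    simp only [Nat.succ_descFactorial_succ, Nat.descFactorial_zero, ← Finset.mul_sum,
      Nat.factorial_succ]
    nlinarith

lemma two_mul_sdeg_le {N r : ℕ} (hr : r ≤ N) : 2 * sdeg N r ≤ N * (N - 1) := by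
  have h1 : sdeg N r ≤ ∑ j ∈ Finset.range N, (N - 1 - j) := by
    rw [sdeg, Fin.sum_univ_eq_sum_range (fun j => N - 1 - j) r]
    exact Finset.sum_le_sum_of_subset (Finset.range_mono hr)
  rw [Finset.sum_range_reflect (fun j => j) N] at h1
  have h2 := Finset.sum_range_id_mul_two N
  omega

lemma descFactorial_le_factorial {N r : ℕ} (hr : r ≤ N) : N.descFactorial r ≤ N.factorial := by
  rw [← Nat.factorial_mul_descFactorial hr]
  exact Nat.le_mul_of_pos_left _ (Nat.factorial_pos _)

/-- The error terms of the bounds for all cycle lengths, added up, stay below the main term. -/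
lemma numerics {N m : ℕ} (hN : 1 ≤ N) (hm : 2 * (N + 1) * (N + 1).factorial ≤ m) :
    2 * ((N + 1) * N) + ∑ r ∈ Finset.range N,
      (m + 2) * (N.descFactorial r * ((N + 1) * (N - 1) + 2 * sdeg N r) + 6) < 2 * m ^ 2 := by
  have h1 : ∑ r ∈ Finset.range N,
      (m + 2) * (N.descFactorial r * ((N + 1) * (N - 1) + 2 * sdeg N r) + 6) ≤
      (m + 2) * (2 * N.factorial * ((N + 1) * (N - 1) + N * (N - 1)) + 6 * N) := by
    rw [← Finset.mul_sum, Finset.sum_add_distrib]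
    refine Nat.mul_le_mul_left _ (add_le_add ?_ (by simp [mul_comm]))
    refine le_trans (Finset.sum_le_sum fun r hr => Nat.mul_le_mul_left _
      (add_le_add le_rfl (two_mul_sdeg_le (Finset.mem_range.mp hr).le))) ?_
    rw [← Finset.sum_mul]
    exact Nat.mul_le_mul_right _ (by have := sum_descFactorial_le N; omega)
  have hf := Nat.factorial_pos N
  rw [Nat.factorial_succ] at hm
  generalize N.factorial = f at *
  obtain ⟨L, rfl⟩ : ∃ L, N = L + 1 := ⟨N - 1, by omega⟩
  refine lt_of_le_of_lt (add_le_add le_rfl h1) ?_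
  simp only [Nat.add_sub_cancel]
  have h2 : 2 * (L + 1 + 1) * ((L + 1 + 1) * f) * m ≤ m * m := Nat.mul_le_mul_right _ hm
  have h3 : 2 * (L + 1 + 1) * ((L + 1 + 1) * f) * (f * (4 * L + 10)) ≤ m * (f * (4 * L + 10)) :=
    Nat.mul_le_mul_right _ hm
  have h4 : (6 * (L + 1)) * m ≤ (6 * (L + 1)) * (f * m) :=
    Nat.mul_le_mul_left _ (Nat.le_mul_of_pos_left _ hf)
  have h5 : f ≤ f * f := Nat.le_mul_of_pos_left _ hf
  have h6 : f * L ^ 3 ≤ f * f * L ^ 3 := Nat.mul_le_mul_right _ h5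
  have h7 : f * L ^ 2 ≤ f * f * L ^ 2 := Nat.mul_le_mul_right _ h5
  have h8 : f * L ≤ f * f * L := Nat.mul_le_mul_right _ h5
  have h9 : L ^ 2 ≤ f * L ^ 2 := Nat.le_mul_of_pos_left _ hf
  have h10 : L ≤ f * L := Nat.le_mul_of_pos_left _ hf
  nlinarith

section
variable {k : Type u} [Field k]

/-- A point with exact Frobenius period `r + 1` in the fibre `{x i}` of `M` gives a Frobenius cycle
inside this fibre. -/
lemma exists_cycle {N r q : ℕ} {x : Fin (N + 1) → k}
    (hq : ∀ i, ∃ j, x i ^ q = x j)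
    (hper : Function.minimalPeriod (fun z : k => z ^ q) (x 0) = r + 1) :
    ∃ ι : Fin r ↪ Fin N, ∀ i, tup x ι (i + 1) = tup x ι i ^ q := by
  set φ : k → k := fun z => z ^ q with hφ
  have hmem : ∀ l : ℕ, ∃ j, φ^[l] (x 0) = x j := by
    intro l
    induction l with
    | zero => exact ⟨0, rfl⟩
    | succ l ih =>
      obtain ⟨j, hj⟩ := ih
      obtain ⟨j', hj'⟩ := hq j
      exact ⟨j', by rw [Function.iterate_succ_apply', hj, ← hj']⟩
  choose f hf using hmem
  have hinj := Function.iterate_injOn_Iio_minimalPeriod (f := φ) (x := x 0)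
  rw [hper] at hinj
  have hne : ∀ j : Fin r, f (j + 1) ≠ 0 := by
    intro j h0
    have h1 := hf (j + 1)
    rw [h0] at h1
    have h2 := hinj (x₁ := (j : ℕ) + 1) (x₂ := 0) (Set.mem_Iio.mpr (by omega))
      (Set.mem_Iio.mpr (by omega)) h1
    omega
  let ι : Fin r ↪ Fin N := ⟨fun j => (f (j + 1)).pred (hne j), by
    intro a b hab
    have h1 : f (a + 1) = f (b + 1) := Fin.pred_inj.mp hab
    have h2 : φ^[(a : ℕ) + 1] (x 0) = φ^[(b : ℕ) + 1] (x 0) := by rw [hf, hf, h1]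
    have h3 := hinj (Set.mem_Iio.mpr (by omega)) (Set.mem_Iio.mpr (by omega)) h2
    exact Fin.ext (by omega)⟩
  have htup : ∀ i : Fin (r + 1), tup x ι i = φ^[(i : ℕ)] (x 0) := by
    intro i
    refine Fin.cases rfl (fun j => ?_) i
    rw [Fin.val_succ, hf]
    change x ((f (j + 1)).pred (hne j)).succ = _
    rw [Fin.succ_pred]
  refine ⟨ι, fun i => ?_⟩
  have hstep : tup x ι i ^ q = φ^[(i : ℕ) + 1] (x 0) := by
    rw [Function.iterate_succ_apply', ← htup]
  rw [hstep, htup, Fin.val_add_one]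
  split_ifs with hi
  · have h1 := Function.iterate_minimalPeriod (f := φ) (x := x 0)
    rw [hper] at h1
    rw [hi, Fin.val_last, h1]
    rfl
  · rfl

end

/-! ### Counting points by Frobenius period -/

section
variable {k : Type u} [Field k]

lemma card_fibre [IsAlgClosed k] [DecidableEq k] {M : k[X]} {N : ℕ} (h : Morse M N) {t : k}
    (ht : ∀ β, (derivative M).eval β = 0 → M.eval β ≠ t) :
    (M - C t).roots.toFinset.card = N + 1 := by
  obtain ⟨h1, h2⟩ := natDegree_map_sub_C (R := k) h.monic h.deg t
  rw [Algebra.algebraMap_self, Polynomial.map_id] at h1 h2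
  have hnd : (M - C t).roots.Nodup := by
    rw [Multiset.nodup_iff_count_le_one]
    intro β
    rw [count_roots]
    by_contra hlt
    rw [not_le, one_lt_rootMultiplicity_iff_isRoot h1.ne_zero] at hlt
    obtain ⟨h3, h4⟩ := hlt
    simp only [IsRoot.def, eval_sub, eval_C, derivative_sub, derivative_C, sub_zero] at h3 h4
    exact ht β h4 (sub_eq_zero.mp h3)
  rw [Multiset.toFinset_card_of_nodup hnd, ← h2]
  exact splits_iff_card_roots.mp (IsAlgClosed.splits _)

lemma mem_fibre [DecidableEq k] {M : k[X]} {N : ℕ} (h : Morse M N) {t α : k} :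
    α ∈ (M - C t).roots.toFinset ↔ M.eval α = t := by
  obtain ⟨h1, h2⟩ := natDegree_map_sub_C (R := k) h.monic h.deg t
  rw [Algebra.algebraMap_self, Polynomial.map_id] at h1
  rw [Multiset.mem_toFinset, mem_roots h1.ne_zero, IsRoot.def, eval_sub, eval_C, sub_eq_zero]

/-- The whole fibre of `M` through a point `α` above a noncritical value, listed from `α` on. -/
lemma exists_fibre [IsAlgClosed k] {M : k[X]} {N : ℕ} (h : Morse M N) {α : k}
    (ht : ∀ β, (derivative M).eval β = 0 → M.eval β ≠ M.eval α) :
    ∃ x : Fin (N + 1) → k, Function.Injective x ∧ x 0 = α ∧ ∀ β, M.eval β = M.eval α ↔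
      ∃ i, x i = β := by
  classical
  have hc := card_fibre h ht
  let e := Finset.equivFinOfCardEq hc
  let a : (M - C (M.eval α)).roots.toFinset := ⟨α, (mem_fibre h).mpr rfl⟩
  let e' : Fin (N + 1) ≃ (M - C (M.eval α)).roots.toFinset := (Equiv.swap 0 (e a)).trans e.symm
  refine ⟨fun i => e' i, fun i j hij => e'.injective (Subtype.ext hij), ?_, fun β => ⟨fun hβ => ?_, ?_⟩⟩
  · simp [e', a]
  · exact ⟨e'.symm ⟨β, (mem_fibre h).mpr hβ⟩, by simp⟩
  · rintro ⟨i, rfl⟩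
    exact (mem_fibre h).mp (e' i).2

end

section
variable {F : Type u} [Field F] [Fintype F] {k : Type u} [Field k] [Algebra F k]

lemma eval_pow_card (M : F[X]) (α : k) :
    aeval (α ^ Fintype.card F) M = (aeval α M) ^ Fintype.card F := by
  have h := aeval_algHom_apply (FiniteField.frobeniusAlgHom F k) α M
  simpa using h

/-- The period of the Frobenius map on a fibre with `N + 1` points. -/
lemma period_le {N : ℕ} {x : Fin (N + 1) → k}
    (hq : ∀ i, ∃ j, x i ^ Fintype.card F = x j) :
    1 ≤ Function.minimalPeriod (fun z : k => z ^ Fintype.card F) (x 0) ∧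
      Function.minimalPeriod (fun z : k => z ^ Fintype.card F) (x 0) ≤ N + 1 := by
  set φ : k → k := fun z => z ^ Fintype.card F with hφ
  have hφinj : Function.Injective φ := (FiniteField.frobeniusAlgHom F k).toRingHom.injective
  have hmem : ∀ l : ℕ, ∃ j, φ^[l] (x 0) = x j := by
    intro l
    induction l with
    | zero => exact ⟨0, rfl⟩
    | succ l ih =>
      obtain ⟨j, hj⟩ := ih
      obtain ⟨j', hj'⟩ := hq j
      exact ⟨j', by rw [Function.iterate_succ_apply', hj, ← hj']⟩
  choose f hf using hmem
  obtain ⟨a, b, hab, hfab⟩ := Fintype.exists_ne_map_eq_of_card_lt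
    (fun l : Fin (N + 2) => f l) (by simp)
  have key : ∀ a b : Fin (N + 2), a < b → f a = f b →
      1 ≤ Function.minimalPeriod φ (x 0) ∧ Function.minimalPeriod φ (x 0) ≤ N + 1 := by
    intro a b hab hfab
    have hlt : (a : ℕ) < b := hab
    have h1 : φ^[(a : ℕ)] (φ^[(b : ℕ) - a] (x 0)) = φ^[(a : ℕ)] (x 0) := by
      rw [← Function.iterate_add_apply, Nat.add_sub_cancel' hlt.le, hf, hf, hfab]
    have h2 : Function.IsPeriodicPt φ (b - a) (x 0) := (hφinj.iterate _) h1
    have hb := b.isLt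
    exact ⟨h2.minimalPeriod_pos (by omega), (h2.minimalPeriod_le (by omega)).trans (by omega)⟩
  rcases lt_or_gt_of_ne hab with h | h
  · exact key a b h hfab
  · exact key b a h hfab.symm

/-- A fibre forming a single Frobenius orbit corresponds to an irreducible polynomial. -/
lemma irreducible_of_period {N : ℕ} {M : F[X]} (hM : M.Monic) (hN : M.natDegree = N + 1) {t : F}
    {α : k} (hα : aeval α M = algebraMap F k t)
    (hper : Function.minimalPeriod (fun z : k => z ^ Fintype.card F) α = N + 1) :
    Irreducible (M - C t) := by
  classical
  set φ : k → k := fun z => z ^ Fintype.card F with hφ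
  have hmon : (M - C t).Monic ∧ (M - C t).natDegree = N + 1 := by
    have := natDegree_map_sub_C (R := F) hM hN t
    rwa [Algebra.algebraMap_self, Polynomial.map_id] at this
  have hroot : aeval α (M - C t) = 0 := by rw [map_sub, hα, aeval_C, sub_self]
  have hαint : IsIntegral F α := ⟨M - C t, hmon.1, hroot⟩
  have hdvd := minpoly.dvd F α hroot
  have hiter : ∀ l, aeval (φ^[l] α) (minpoly F α) = 0 := by
    intro l
    induction l with
    | zero => exact minpoly.aeval F α
    | succ l ih =>
      rw [Function.iterate_succ_apply', hφ]
      change aeval ((φ^[l] α) ^ Fintype.card F) _ = 0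
      rw [eval_pow_card, ih, zero_pow Fintype.card_ne_zero]
  have hinj := Function.iterate_injOn_Iio_minimalPeriod (f := φ) (x := α)
  rw [hper] at hinj
  have hne := (minpoly.monic hαint).map (algebraMap F k)
  have hsub : (Finset.range (N + 1)).image (fun l => φ^[l] α) ⊆
      ((minpoly F α).map (algebraMap F k)).roots.toFinset := by
    intro z hz
    obtain ⟨l, -, rfl⟩ := Finset.mem_image.mp hz
    rw [Multiset.mem_toFinset, mem_roots hne.ne_zero, IsRoot.def, eval_map_algebraMap]
    exact hiter l
  have hcard := Finset.card_le_card hsub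
  rw [Finset.card_image_of_injOn (by
    intro a ha b hb hab
    exact hinj (Finset.mem_range.mp ha) (Finset.mem_range.mp hb) hab), Finset.card_range] at hcard
  have hle : N + 1 ≤ (minpoly F α).natDegree := by
    refine hcard.trans ((Multiset.toFinset_card_le _).trans ((card_roots' _).trans ?_))
    rw [(minpoly.monic hαint).natDegree_map]
  have heq : M - C t = minpoly F α :=
    eq_of_monic_of_dvd_of_natDegree_le (minpoly.monic hαint) hmon.1 hdvd (by rw [hmon.2]; exact hle)
  rw [heq]
  exact minpoly.irreducible hαint

/-- The result for a monic polynomial: counting the points above the noncritical values in `F` by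
their Frobenius period. -/
lemma exists_irreducible [IsAlgClosed k] {N : ℕ} {M : F[X]} (hN : 1 ≤ N)
    (h : Morse (M.map (algebraMap F k)) N)
    (hq : (2 * (N + 1) * (N + 1).factorial) ^ 2 ≤ Fintype.card F) :
    ∃ b : F, Irreducible (M + C b) := by
  classical
  by_contra hcon
  push Not at hcon
  have hM : M.Monic := monic_of_injective (algebraMap F k).injective h.monic
  have hMN : M.natDegree = N + 1 := by rw [← h.deg, natDegree_map]
  obtain ⟨p, hchar, e, hp, hpe⟩ := FiniteField.card' F
  have : CharP k p := charP_of_injective_algebraMap (algebraMap F k).injective p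
  have : ExpChar k p := ExpChar.prime hp
  set q := Fintype.card F with hqdef
  set Mk := M.map (algebraMap F k) with hMk
  -- the noncritical values in `F`, and the points above them
  set crit : Finset k := (derivative Mk).roots.toFinset.image (fun β => Mk.eval β) with hcrit
  set V : Finset F := Finset.univ.filter fun t => algebraMap F k t ∉ crit with hV
  set 𝒜 : Finset k := V.biUnion fun t => (Mk - C (algebraMap F k t)).roots.toFinset with hA
  have hder : derivative Mk ≠ 0 := by
    intro h0
    have h1 : (derivative Mk).coeff N = ((N + 1 : ℕ) : k) := by
      rw [coeff_derivative, ← h.deg, h.monic.coeff_natDegree]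
      push_cast [h.deg]
      ring
    rw [h0, coeff_zero] at h1
    exact h.char h1.symm
  have hmemcrit : ∀ β, (derivative Mk).eval β = 0 → Mk.eval β ∈ crit := fun β hβ =>
    Finset.mem_image.mpr ⟨β, by rw [Multiset.mem_toFinset, mem_roots hder]; exact hβ, rfl⟩
  have hnoncrit : ∀ t ∈ V, ∀ β, (derivative Mk).eval β = 0 → Mk.eval β ≠ algebraMap F k t := by
    intro t ht β hβ h1
    refine (Finset.mem_filter.mp ht).2 ?_
    rw [← h1]
    exact hmemcrit β hβ
  have hcritcard : crit.card ≤ N := by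
    refine Finset.card_image_le.trans ((Multiset.toFinset_card_le _).trans
      ((card_roots' _).trans ((natDegree_derivative_le _).trans ?_)))
    rw [h.deg, Nat.add_sub_cancel]
  have hVcard : q ≤ V.card + N := by
    have h1 := Finset.card_filter_add_card_filter_not (s := (Finset.univ : Finset F))
      (fun t => algebraMap F k t ∉ crit)
    rw [Finset.card_univ, ← hqdef, ← hV] at h1
    have h2 : (Finset.univ.filter fun t : F => ¬ algebraMap F k t ∉ crit).card ≤ crit.card :=
      Finset.card_le_card_of_injOn (algebraMap F k) (fun t ht => by
        simpa using (Finset.mem_filter.mp ht).2) (algebraMap F k).injective.injOn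
    omega
  have hAcard : 𝒜.card = V.card * (N + 1) := by
    rw [hA, Finset.card_biUnion, Finset.sum_congr rfl fun t ht => card_fibre h (hnoncrit t ht),
      Finset.sum_const, smul_eq_mul]
    intro t _ t' _ htt'
    refine Finset.disjoint_left.mpr ?_
    intro α h1 h2
    rw [mem_fibre h] at h1 h2
    exact htt' ((algebraMap F k).injective (h1.symm.trans h2))
  -- every point of `𝒜` starts a Frobenius cycle of length at most `N`
  have hpoint : ∀ α ∈ 𝒜, ∃ x : Fin (N + 1) → k, RootSys Mk x ∧ x 0 = α ∧
      (∀ i, ∃ j, x i ^ q = x j) ∧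
      Function.minimalPeriod (fun z : k => z ^ q) α - 1 < N ∧
      1 ≤ Function.minimalPeriod (fun z : k => z ^ q) α := by
    intro α hα
    obtain ⟨t, ht, hαt⟩ := Finset.mem_biUnion.mp hα
    rw [mem_fibre h] at hαt
    obtain ⟨x, hxinj, hx0, hx⟩ := exists_fibre h (α := α) (by rw [hαt]; exact hnoncrit t ht)
    have hfrob : ∀ i, ∃ j, x i ^ q = x j := by
      intro i
      obtain ⟨j, hj⟩ := (hx (x i ^ q)).mp (by
        have h1 := eval_pow_card M (x i)
        have h2 := (hx (x i)).mpr ⟨i, rfl⟩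
        rw [hαt, hMk, eval_map_algebraMap] at h2
        rw [h2, ← map_pow, FiniteField.pow_card] at h1
        rw [hαt, hMk, eval_map_algebraMap, h1])
      exact ⟨j, hj.symm⟩
    have hper := period_le (F := F) hfrob
    rw [← hqdef, hx0] at hper
    refine ⟨x, ⟨hxinj, fun i => ?_⟩, hx0, hfrob, ?_, hper.1⟩
    · rw [coe_aeval_eq_eval, coe_aeval_eq_eval, (hx (x i)).mpr ⟨i, rfl⟩, hx0]
    · have hne : Function.minimalPeriod (fun z : k => z ^ q) α ≠ N + 1 := by
        intro h1
        refine hcon (-t) ?_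
        rw [C_neg, ← sub_eq_add_neg]
        refine irreducible_of_period hM hMN (α := α) ?_ h1
        rw [← hαt, hMk, eval_map_algebraMap]
      omega
  have hsum := Finset.card_eq_sum_card_fiberwise (s := 𝒜) (t := Finset.range N)
    (f := fun α => Function.minimalPeriod (fun z : k => z ^ q) α - 1)
    (fun α hα => by
      obtain ⟨x, -, -, -, h1, -⟩ := hpoint α hα
      exact Finset.mem_coe.mpr (Finset.mem_range.mpr h1))
  -- Stepanov's bound for each period, with vanishing order `m = ⌊√q⌋`
  set m := Nat.sqrt q with hm
  have hm1 : m ^ 2 ≤ q := Nat.sqrt_le' q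
  have hm2 : q ≤ m * (m + 2) := by
    have h1 : q < (m + 1) * (m + 1) := Nat.lt_succ_sqrt q
    nlinarith
  have hm3 : 2 * (N + 1) * (N + 1).factorial ≤ m := Nat.le_sqrt'.mpr hq
  have hf := Nat.factorial_pos N
  have hm4 : 2 * (N + 1) * ((N + 1) * N.factorial) ≤ m := by rwa [← Nat.factorial_succ]
  have hbound : ∀ r ∈ Finset.range N, 2 * (𝒜.filter fun α =>
      Function.minimalPeriod (fun z : k => z ^ q) α - 1 = r).card ≤ 2 * q +
      (m + 2) * (N.descFactorial r * ((N + 1) * (N - 1) + 2 * sdeg N r) + 6) := by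
    intro r hr
    have hrN : r ≤ N := (Finset.mem_range.mp hr).le
    have hd := descFactorial_le_factorial hrN
    have hs := two_mul_sdeg_le hrN
    have h1 := Nat.mul_le_mul hd hs
    have h2 := Nat.mul_le_mul_right ((N + 1) * (N - 1)) hd
    obtain ⟨L, hL⟩ : ∃ L, N = L + 1 := ⟨N - 1, by omega⟩
    have hL1 : N - 1 = L := by omega
    rw [hpe] at hm1 hm2 ⊢
    refine stepanov_bound h hN hrN hm1 hm2 ?_ ?_ ?_ _ ?_
    · rw [hL1] at h1
      nlinarith
    · rw [hL1] at h2 ⊢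
      nlinarith
    · have h3 : 2 * 2 * (2 * 1) ≤ 2 * (N + 1) * ((N + 1) * N.factorial) := by gcongr <;> omega
      omega
    · intro α hα
      obtain ⟨hα1, hα2⟩ := Finset.mem_filter.mp hα
      obtain ⟨x, hx, hx0, hfrob, -, h1⟩ := hpoint α hα1
      refine ⟨x, hx, hx0, ?_⟩
      rw [← hpe] at hα2 ⊢
      exact exists_cycle hfrob (by rw [hx0]; omega)
  have hfin : 2 * 𝒜.card ≤ ∑ r ∈ Finset.range N, (2 * q +
      (m + 2) * (N.descFactorial r * ((N + 1) * (N - 1) + 2 * sdeg N r) + 6)) := by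
    rw [hsum, Finset.mul_sum]
    exact Finset.sum_le_sum hbound
  rw [Finset.sum_add_distrib, Finset.sum_const, Finset.card_range, smul_eq_mul, hAcard] at hfin
  have hnum := numerics hN hm3
  nlinarith

end

/-! ### Reduction to monic polynomials -/

/-- The monic multiple of a Morse polynomial satisfies the Morse conditions over the algebraic
closure. -/
lemma morse_of_isMorse {F : Type u} [Field F] {M : F[X]} {N : ℕ} (hN : M.natDegree = N + 1)
    (hchar : ((N + 1 : ℕ) : F) ≠ 0) (h : IsMorse M) :
    Morse ((C M.leadingCoeff⁻¹ * M).map (algebraMap F (AlgebraicClosure F))) N := by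
  classical
  set K := AlgebraicClosure F
  set Mk := M.map (algebraMap F K) with hMk
  have hl : M.leadingCoeff ≠ 0 := leadingCoeff_ne_zero.mpr (by rintro rfl; simp at hN)
  set l : K := algebraMap F K M.leadingCoeff⁻¹ with hldef
  have hl' : l ≠ 0 := by
    rw [hldef, _root_.map_ne_zero]
    exact inv_ne_zero hl
  have hmap : (C M.leadingCoeff⁻¹ * M).map (algebraMap F K) = C l * Mk := by
    rw [Polynomial.map_mul, map_C]
  have hchar' : ((N + 1 : ℕ) : K) ≠ 0 := by
    rw [← map_natCast (algebraMap F K), _root_.map_ne_zero]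
    exact hchar
  have hder : derivative Mk ≠ 0 := by
    intro h0
    have h1 : (derivative Mk).coeff N = algebraMap F K M.leadingCoeff * ((N + 1 : ℕ) : K) := by
      rw [coeff_derivative, hMk, coeff_map, ← hN, coeff_natDegree]
      push_cast [hN]
      ring
    rw [h0, coeff_zero] at h1
    exact mul_ne_zero ((_root_.map_ne_zero _).mpr hl) hchar' h1.symm
  have hroot : ∀ β, l * (derivative Mk).eval β = 0 → β ∈ (derivative Mk).roots := fun β hβ => by
    rw [mem_roots hder]
    exact (mul_eq_zero.mp hβ).resolve_left hl'
  obtain ⟨h1, h2⟩ := h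
  rw [hmap]
  refine ⟨?_, ?_, hchar', fun β hβ => ?_, fun β β' hβ hβ' hval => ?_⟩
  · rw [← hmap]
    refine Monic.map _ ?_
    rw [Monic, leadingCoeff_mul, leadingCoeff_C, inv_mul_cancel₀ hl]
  · rw [natDegree_C_mul hl', hMk, natDegree_map, hN]
  · simp only [derivative_C_mul, eval_mul, eval_C] at hβ ⊢
    refine mul_ne_zero hl' fun h3 => ?_
    have h4 := (one_lt_rootMultiplicity_iff_isRoot hder).mpr
      ⟨isRoot_of_mem_roots (hroot β hβ), h3⟩
    rw [← count_roots] at h4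
    have h5 := Multiset.nodup_iff_count_le_one.mp h1 β
    exact absurd h4 (not_lt.mpr h5)
  · simp only [derivative_C_mul, eval_mul, eval_C] at hβ hβ' hval
    by_contra hne
    exact h2 β (hroot β hβ) β' (hroot β' hβ') hne (mul_left_cancel₀ hl' hval)

end MorseIrr

theorem stmt_7 (n : ℕ) (F : Type*) [Field F] [Fintype F]
    (M : Polynomial F) (hM : M.natDegree = n) (hMorse : IsMorse M)
    (hcop : Nat.Coprime n (Fintype.card F))
    (hq : (2 * n * n.factorial) ^ 2 ≤ Fintype.card F) :
    ∃ b : F, Irreducible (M + C b) := by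
  obtain ⟨p, hchar, e, hp, hpe⟩ := FiniteField.card' F
  have hcard : 1 < Fintype.card F := Fintype.one_lt_card
  have hn0 : n ≠ 0 := by
    rintro rfl
    rw [Nat.coprime_zero_left] at hcop
    omega
  obtain ⟨N, rfl⟩ := Nat.exists_eq_succ_of_ne_zero hn0
  rcases Nat.eq_zero_or_pos N with rfl | hN
  · exact ⟨0, by
      rw [C_0, add_zero]
      exact irreducible_of_degree_eq_one ((degree_eq_iff_natDegree_eq_of_pos one_pos).mpr hM)⟩
  have hinv : ((N + 1 : ℕ) : F) ≠ 0 := by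
    rw [Ne, CharP.cast_eq_zero_iff F p]
    intro hdvd
    have h1 : p ∣ Fintype.card F := hpe ▸ dvd_pow_self p e.pos.ne'
    exact hp.one_lt.ne' (Nat.dvd_one.mp (hcop ▸ Nat.dvd_gcd hdvd h1))
  have hl : M.leadingCoeff ≠ 0 := leadingCoeff_ne_zero.mpr (by rintro rfl; simp at hM)
  obtain ⟨b, hb⟩ := MorseIrr.exists_irreducible hN (MorseIrr.morse_of_isMorse hM hinv hMorse) hq
  refine ⟨M.leadingCoeff * b, ?_⟩
  have h1 : M + C (M.leadingCoeff * b) = C M.leadingCoeff * (C M.leadingCoeff⁻¹ * M + C b) := by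
    rw [mul_add, ← mul_assoc, ← C_mul, mul_inv_cancel₀ hl, C_1, one_mul, C_mul]
  rw [h1]
  exact (irreducible_isUnit_mul (isUnit_C.mpr (isUnit_iff_ne_zero.mpr hl))).mpr hb
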